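/- arXiv:2412.20809 — 2 statements merged into one kernel-verified Lean document; each statement's English description precedes it below -/
import Mathlib

section
/- Let k be an algebraically closed field of characteristic 0, N ≥ 2, and let λ = (λ₁ ≥ … ≥ λ_p ≥ 1) be a partition of N with λ₁ ≥ 3 and 2(N − p) ≥ N. Then the Zariski closure in Mat_N(k) of the set {x + y : x, y ∈ O_λ} equals {M ∈ Mat_N(k) : Tr(M) = 0}; that is, the conical secant variety of the nilpotent orbit O_λ is all of sl_N(k). -/
open Matrix

noncomputable section

/-- The Zariski closure of a set of `N × N` matrices: `M` lies in the closure of `S` iff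
every polynomial in the matrix entries vanishing on `S` vanishes at `M`. -/
def zClosure {k : Type*} [CommRing k] {N : ℕ}
    (S : Set (Matrix (Fin N) (Fin N) k)) : Set (Matrix (Fin N) (Fin N) k) :=
  {M | ∀ P : MvPolynomial (Fin N × Fin N) k,
      (∀ x ∈ S, MvPolynomial.eval (fun q => x q.1 q.2) P = 0) →
      MvPolynomial.eval (fun q => M q.1 q.2) P = 0}

/-- The set of nilpotent matrices of Jordan type `lam`:
`rank (M ^ i) = ∑ l, max (lam l - i, 0)` for all `i ≥ 1`. -/
def jordanOrbit (k : Type*) [Field k] (N : ℕ) {p : ℕ} (lam : Fin p → ℕ) :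
    Set (Matrix (Fin N) (Fin N) k) :=
  {M | ∀ i : ℕ, 1 ≤ i → (M ^ i).rank = ∑ l, (lam l - i)}

/-!
The tangent space `[gl, x]` of the conjugation orbit of `x` is the orthogonal complement, for the
trace form, of the centralizer of `x`. If `x` and `y` lie in the closure of `O_λ` and only scalar
matrices commute with both, then `[gl, x] + [gl, y] = sl_N`: every traceless `D` is the velocity at
`x + y` of a curve in the closure of `O_λ + O_λ`. Let a polynomial vanish on that closure and expand
it around `x + y`. Along such curves its lowest nonzero homogeneous component must vanish on all
of `sl_N`; by induction on the degree every component does, so the closure contains `sl_N`.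

For the pair, order the basis vectors by their position in the Jordan chains of type `λ`. A matrix
that always moves basis vectors to strictly later positions is in the closure of `O_λ`: on the line
joining it to the Jordan matrix almost all points have the ranks of type `λ`. Because `λ` has at
most `N / 2` parts, a shift by `N / 2` moves to later positions, and because `λ₁ ≥ 3` so does the
map from index `N / 2` to the last index; this leaves room for `x` and `y` with scalar commutant.
-/

open Polynomial Filter

section TangentCone

variable {k σ : Type*} [CommRing k]

theorem aeval_mul_of_isHomogeneous {R : Type*} [CommRing R] [Algebra k R]
    {P : MvPolynomial σ k} {n : ℕ} (hP : P.IsHomogeneous n) (c : R) (e : σ → R) :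
    MvPolynomial.aeval (fun q => c * e q) P = c ^ n * MvPolynomial.aeval e P := by
  simp only [MvPolynomial.aeval_def, MvPolynomial.eval₂_eq, Finset.mul_sum]
  refine Finset.sum_congr rfl fun d hd => ?_
  rw [hP.degree_eq_sum_deg_support hd, ← Finset.prod_pow_eq_pow_sum]
  simp only [mul_pow, Finset.prod_mul_distrib]
  ring

theorem eval_mvPolynomial_bind₁ {τ : Type*} (F : σ → MvPolynomial τ k) (x : τ → k)
    (P : MvPolynomial σ k) :
    MvPolynomial.eval x (MvPolynomial.bind₁ F P) =
      MvPolynomial.eval (fun q => MvPolynomial.eval x (F q)) P :=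
  MvPolynomial.eval₂Hom_bind₁ (RingHom.id k) x F P

theorem eval_mvPolynomial_aeval (P : MvPolynomial σ k) (e : σ → k[X]) (t : k) :
    (MvPolynomial.aeval e P).eval t = MvPolynomial.eval (fun q => (e q).eval t) P := by
  have : (aeval t).comp (MvPolynomial.aeval e) =
      MvPolynomial.aeval (R := k) fun q => (e q).eval t := by
    ext q
    simp [coe_aeval_eq_eval]
  simpa [coe_aeval_eq_eval, MvPolynomial.aeval_eq_eval] using DFunLike.congr_fun this P

theorem aeval_X_mul_eq_sum (P : MvPolynomial σ k) (e : σ → k[X]) :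
    MvPolynomial.aeval (fun q => X * e q) P = ∑ i ∈ Finset.range (P.totalDegree + 1),
      X ^ i * MvPolynomial.aeval e (MvPolynomial.homogeneousComponent i P) := by
  conv_lhs => rw [← MvPolynomial.sum_homogeneousComponent P, map_sum]
  exact Finset.sum_congr rfl fun i _ => aeval_mul_of_isHomogeneous
    (MvPolynomial.homogeneousComponent_isHomogeneous i P) X e

variable [IsDomain k]

theorem eventually_eval_ne_zero {f : k[X]} (hf : f ≠ 0) : ∀ᶠ t in cofinite, f.eval t ≠ 0 :=
  (finite_setOfPred_isRoot hf).compl_mem_cofinite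

theorem eq_zero_of_eventually_eval_eq_zero [Infinite k] {f : k[X]}
    (hf : ∀ᶠ t in cofinite, f.eval t = 0) : f = 0 := by
  by_contra h
  obtain ⟨t, ht, ht'⟩ := (hf.and (eventually_eval_ne_zero h)).exists
  exact ht' ht

theorem X_dvd_of_sum_X_pow_mul_eq_zero {s : Finset ℕ} {a : ℕ → k[X]}
    (hsum : ∑ i ∈ s, X ^ i * a i = 0) {n : ℕ} (hn : n ∈ s) (hlow : ∀ i ∈ s, i < n → a i = 0) :
    X ∣ a n := by
  have hdvd : X ^ (n + 1) ∣ ∑ i ∈ s.erase n, X ^ i * a i := Finset.dvd_sum fun i hi => by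
    obtain ⟨hin, his⟩ := Finset.mem_erase.mp hi
    rcases hin.lt_or_gt with h | h
    · rw [hlow i his h, mul_zero]
      exact dvd_zero _
    · exact (pow_dvd_pow X h).mul_right _
  rw [← Finset.add_sum_erase s _ hn] at hsum
  rw [← dvd_neg, ← eq_neg_of_add_eq_zero_left hsum, pow_succ] at hdvd
  exact (mul_dvd_mul_iff_left (pow_ne_zero n X_ne_zero)).mp hdvd

-- Along `t ↦ t * e t` the lowest nonzero homogeneous component of `P` dominates as `t → 0`, so it
-- vanishes at `e 0`.
theorem homogeneousComponent_eval_eq_zero_of_curves [Infinite k] {V : Set (σ → k)}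
    {P : MvPolynomial σ k}
    (h : ∀ d ∈ V, ∃ e : σ → k[X], (fun q => (e q).eval 0) = d ∧ ∀ᶠ t in cofinite,
      (fun q => (e q).eval t) ∈ V ∧ MvPolynomial.eval (fun q => t * (e q).eval t) P = 0)
    (n : ℕ) : ∀ d ∈ V, MvPolynomial.eval d (MvPolynomial.homogeneousComponent n P) = 0 := by
  induction n using Nat.strong_induction_on with
  | _ n ih =>
  intro d hd
  by_cases hn : P.totalDegree < n
  · rw [MvPolynomial.homogeneousComponent_eq_zero _ _ hn, map_zero]
  obtain ⟨e, rfl, he⟩ := h d hd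
  have hlow : ∀ i < n, MvPolynomial.aeval e (MvPolynomial.homogeneousComponent i P) = 0 :=
    fun i hi => eq_zero_of_eventually_eval_eq_zero <| he.mono fun t ht => by
      rw [eval_mvPolynomial_aeval]
      exact ih i hi _ ht.1
  have hsum : MvPolynomial.aeval (fun q => X * e q) P = 0 :=
    eq_zero_of_eventually_eval_eq_zero <| he.mono fun t ht => by
      simpa only [eval_mvPolynomial_aeval, eval_mul, eval_X] using ht.2
  rw [aeval_X_mul_eq_sum] at hsum
  have hn' : n ∈ Finset.range (P.totalDegree + 1) := Finset.mem_range.mpr (by omega)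
  rw [← eval_mvPolynomial_aeval, ← coeff_zero_eq_eval_zero]
  exact X_dvd_iff.mp (X_dvd_of_sum_X_pow_mul_eq_zero hsum hn' fun i _ hi => hlow i hi)

theorem eval_eq_zero_of_curves [Infinite k] {V : Set (σ → k)} {P : MvPolynomial σ k}
    (h : ∀ d ∈ V, ∃ e : σ → k[X], (fun q => (e q).eval 0) = d ∧ ∀ᶠ t in cofinite,
      (fun q => (e q).eval t) ∈ V ∧ MvPolynomial.eval (fun q => t * (e q).eval t) P = 0)
    {d : σ → k} (hd : d ∈ V) : MvPolynomial.eval d P = 0 := by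
  rw [← MvPolynomial.sum_homogeneousComponent P, map_sum]
  exact Finset.sum_eq_zero fun n _ => homogeneousComponent_eval_eq_zero_of_curves h n d hd

end TangentCone

section Closure

variable {k : Type*} [CommRing k] {N : ℕ} {S T : Set (Matrix (Fin N) (Fin N) k)}

theorem subset_zClosure : S ⊆ zClosure S := fun _ hx _ hP => hP _ hx

theorem mapsTo_zClosure {f : Matrix (Fin N) (Fin N) k → Matrix (Fin N) (Fin N) k}
    (F : Matrix (Fin N) (Fin N) (MvPolynomial (Fin N × Fin N) k))
    (hF : ∀ x, (MvPolynomial.eval fun q : Fin N × Fin N => x q.1 q.2).mapMatrix F = f x)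
    (h : Set.MapsTo f S (zClosure T)) : Set.MapsTo f (zClosure S) (zClosure T) := by
  intro M hM P hP
  have hcomp : ∀ x : Matrix (Fin N) (Fin N) k, MvPolynomial.eval (fun q => x q.1 q.2)
      (MvPolynomial.bind₁ (fun q : Fin N × Fin N => F q.1 q.2) P) =
        MvPolynomial.eval (fun q : Fin N × Fin N => f x q.1 q.2) P := fun x => by
    rw [← hF, eval_mvPolynomial_bind₁]
    rfl
  rw [← hcomp]
  exact hM _ fun x hx => by rw [hcomp]; exact h hx P hP

theorem map_C_mapMatrix_eval (x c : Matrix (Fin N) (Fin N) k) :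
    (MvPolynomial.eval fun q : Fin N × Fin N => x q.1 q.2).mapMatrix (c.map MvPolynomial.C) =
      c := by
  ext
  simp

theorem mapsTo_mul_mul_zClosure (g g' : Matrix (Fin N) (Fin N) k)
    (h : Set.MapsTo (fun x => g * x * g') S T) :
    Set.MapsTo (fun x => g * x * g') (zClosure S) (zClosure T) :=
  mapsTo_zClosure (g.map MvPolynomial.C * mvPolynomialX (Fin N) (Fin N) k * g'.map MvPolynomial.C)
    (fun x => by
      simp only [map_mul, map_C_mapMatrix_eval, mvPolynomialX_mapMatrix_eval])
    (h.mono_right subset_zClosure)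

theorem mapsTo_transpose_zClosure (h : Set.MapsTo transpose S T) :
    Set.MapsTo transpose (zClosure S) (zClosure T) :=
  mapsTo_zClosure (mvPolynomialX (Fin N) (Fin N) k)ᵀ
    (fun _ => by rw [RingHom.mapMatrix_apply, transpose_map, ← RingHom.mapMatrix_apply,
      mvPolynomialX_mapMatrix_eval])
    (h.mono_right subset_zClosure)

theorem mapsTo_add_left_zClosure (c : Matrix (Fin N) (Fin N) k)
    (h : Set.MapsTo (c + ·) S (zClosure T)) : Set.MapsTo (c + ·) (zClosure S) (zClosure T) :=
  mapsTo_zClosure (c.map MvPolynomial.C + mvPolynomialX (Fin N) (Fin N) k)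
    (fun x => by rw [map_add, map_C_mapMatrix_eval, mvPolynomialX_mapMatrix_eval]) h

theorem add_mem_zClosure_image2 {x y : Matrix (Fin N) (Fin N) k} (hx : x ∈ zClosure S)
    (hy : y ∈ zClosure T) : x + y ∈ zClosure (Set.image2 (· + ·) S T) := by
  have hleft : ∀ a ∈ S, a + y ∈ zClosure (Set.image2 (· + ·) S T) := fun a ha =>
    mapsTo_add_left_zClosure a (fun _ hb => subset_zClosure (Set.mem_image2_of_mem ha hb)) hy
  rw [add_comm]
  exact mapsTo_add_left_zClosure y (fun a ha => by simpa only [add_comm y] using hleft a ha) hx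

variable [IsDomain k] [Infinite k]

theorem mem_zClosure_of_curve (Γ : Matrix (Fin N) (Fin N) k[X])
    (h : ∀ᶠ t in cofinite, (evalRingHom t).mapMatrix Γ ∈ S) (t : k) :
    (evalRingHom t).mapMatrix Γ ∈ zClosure S := by
  intro P hP
  have hval : ∀ s, (MvPolynomial.aeval (fun q : Fin N × Fin N => Γ q.1 q.2) P).eval s =
      MvPolynomial.eval (fun q => (evalRingHom s).mapMatrix Γ q.1 q.2) P :=
    eval_mvPolynomial_aeval P fun q => Γ q.1 q.2
  rw [← hval, eq_zero_of_eventually_eval_eq_zero (h.mono fun s hs => (hval s).trans (hP _ hs)),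
    eval_zero]

theorem add_mem_zClosure_of_curves {V : Set (Matrix (Fin N) (Fin N) k)}
    {B : Matrix (Fin N) (Fin N) k}
    (h : ∀ D ∈ V, ∃ E : Matrix (Fin N) (Fin N) k[X], (evalRingHom 0).mapMatrix E = D ∧
      ∀ᶠ t in cofinite, (evalRingHom t).mapMatrix E ∈ V ∧
        B + t • (evalRingHom t).mapMatrix E ∈ zClosure S)
    {D : Matrix (Fin N) (Fin N) k} (hD : D ∈ V) : B + D ∈ zClosure S := by
  intro P hP
  have hshift : ∀ x : Matrix (Fin N) (Fin N) k, MvPolynomial.eval (fun q => x q.1 q.2)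
      (MvPolynomial.bind₁ (fun q : Fin N × Fin N => MvPolynomial.C (B q.1 q.2) + MvPolynomial.X q)
        P) = MvPolynomial.eval (fun q => (B + x) q.1 q.2) P := fun x => by
    rw [eval_mvPolynomial_bind₁]
    simp only [map_add, MvPolynomial.eval_C, MvPolynomial.eval_X]
    rfl
  rw [← hshift]
  refine eval_eq_zero_of_curves (V := (fun x q => x q.1 q.2) '' V) ?_ ⟨D, hD, rfl⟩
  rintro _ ⟨D, hD, rfl⟩
  obtain ⟨E, rfl, hE⟩ := h D hD
  refine ⟨fun q => E q.1 q.2, rfl, hE.mono fun t ht => ⟨⟨_, ht.1, rfl⟩, ?_⟩⟩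
  exact (hshift (t • (evalRingHom t).mapMatrix E)).trans (ht.2 P hP)

end Closure

section Conjugation

section CommRing

variable {R n : Type*} [CommRing R] [Fintype n]

theorem commute_of_trace_mul_commutator {C x : Matrix n n R}
    (h : ∀ A, trace (C * (A * x - x * A)) = 0) : Commute C x := by
  refine ext_iff_trace_mul_left.mpr fun A => ?_
  have hA := h A
  rw [mul_sub, trace_sub, sub_eq_zero] at hA
  calc trace (A * (C * x)) = trace (C * (x * A)) := by rw [trace_mul_comm, Matrix.mul_assoc]
    _ = trace (C * (A * x)) := hA.symm
    _ = trace (A * (x * C)) := by rw [trace_mul_comm, Matrix.mul_assoc]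

theorem exists_dual_eq_trace_mul (f : Module.Dual R (Matrix n n R)) :
    ∃ C : Matrix n n R, ∀ D, f D = trace (C * D) := by
  classical
  refine ⟨of fun a b => f (single b a 1), fun D => ?_⟩
  conv_lhs => rw [matrix_eq_sum_single D]
  simp only [map_sum, trace, diag_apply, mul_apply, of_apply]
  rw [Finset.sum_comm]
  refine Finset.sum_congr rfl fun a _ => Finset.sum_congr rfl fun b _ => ?_
  rw [mul_comm, ← smul_eq_mul, ← map_smul, smul_single, smul_eq_mul, mul_one]

variable [DecidableEq n]

theorem exists_adjugate_one_add_smul (r : R) (A : Matrix n n R) :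
    ∃ B : Matrix n n R, (1 + r • A).adjugate = 1 + r • B := by
  let π := Ideal.Quotient.mk (Ideal.span {r})
  have hr : π r = 0 := Ideal.Quotient.eq_zero_iff_mem.mpr (Ideal.mem_span_singleton_self r)
  have hone : π.mapMatrix (1 + r • A) = 1 := by
    ext a b
    simp [hr, one_apply, apply_ite π]
  have hadj : π.mapMatrix ((1 + r • A).adjugate - 1) = 0 := by
    rw [map_sub, RingHom.map_adjugate, hone, adjugate_one, map_one, sub_self]
  have hdvd : ∀ a b, r ∣ ((1 + r • A).adjugate - 1) a b := fun a b =>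
    Ideal.mem_span_singleton.mp (Ideal.Quotient.eq_zero_iff_mem.mp (congrFun₂ hadj a b))
  choose B hB using hdvd
  exact ⟨of B, by rw [← sub_eq_iff_eq_add']; ext1 a b; exact hB a b⟩

theorem exists_mul_mul_adjugate_eq (r : R) (A x : Matrix n n R) :
    ∃ E : Matrix n n R, (1 + r • A) * x * ((1 - r • A) * ((1 + r • A) * (1 - r • A)).adjugate) =
      x + r • (A * x - x * A + r • E) := by
  have hsq : (1 + r • A) * (1 - r • A) = 1 + r ^ 2 • -(A * A) := by
    simp only [mul_sub, add_mul, mul_one, one_mul, smul_mul_smul_comm]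
    module
  obtain ⟨B, hB⟩ := exists_adjugate_one_add_smul (r ^ 2) (-(A * A))
  refine ⟨(1 + r • A) * x * (1 - r • A) * B - A * x * A, ?_⟩
  rw [hsq, hB]
  simp only [mul_add, mul_sub, add_mul, sub_mul, mul_one, one_mul, smul_mul_assoc,
    mul_smul_comm, smul_add, smul_sub, smul_smul, mul_assoc]
  module

theorem mapMatrix_eval_map_C (t : R) (A : Matrix n n R) :
    (evalRingHom t).mapMatrix (A.map C) = A := by
  ext
  simp

theorem mapMatrix_eval_smul (t : R) (q : R[X]) (A : Matrix n n R[X]) :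
    (evalRingHom t).mapMatrix (q • A) = q.eval t • (evalRingHom t).mapMatrix A := by
  ext
  simp

end CommRing

variable {k n : Type*} [Field k] [Fintype n] [DecidableEq n]

theorem smul_mul_adjugate_mul_eq_one {g h : Matrix n n k} (hdet : (g * h).det ≠ 0) :
    ((g * h).det⁻¹ • (h * (g * h).adjugate)) * g = 1 := by
  rw [mul_eq_one_comm, Matrix.mul_smul, ← Matrix.mul_assoc, mul_adjugate, smul_smul,
    inv_mul_cancel₀ hdet, one_smul]

-- Conjugating by `g = 1 + t • A` and clearing the denominator `det g` would add a multiple of `x`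
-- to the derivative at `t = 0`; the denominator `det (1 - t ^ 2 • A ^ 2)` has no linear term.
theorem exists_conj_curve (A x : Matrix n n k) :
    ∃ E : Matrix n n k[X], (evalRingHom 0).mapMatrix E = A * x - x * A ∧
      ∀ᶠ t in cofinite, ∃ u : k, u ≠ 0 ∧ ∃ g g' : Matrix n n k, g' * g = 1 ∧
        x + t • (evalRingHom t).mapMatrix E = u • (g * x * g') := by
  let A' : Matrix n n k[X] := A.map C
  let x' : Matrix n n k[X] := x.map C
  let W : Matrix n n k[X] := (1 + (X : k[X]) • A') * (1 - (X : k[X]) • A')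
  have hW : ∀ t, (evalRingHom t).mapMatrix W = (1 + t • A) * (1 - t • A) := fun t => by
    simp only [W, A', map_add, map_sub, map_one, map_mul, mapMatrix_eval_smul,
      mapMatrix_eval_map_C, eval_X]
  have hdet : ∀ t, W.det.eval t = ((1 + t • A) * (1 - t • A)).det := fun t => by
    rw [← hW, ← RingHom.map_det, coe_evalRingHom]
  have hdet0 : W.det ≠ 0 := fun h => by simpa [h] using hdet 0
  obtain ⟨F, hF⟩ := exists_mul_mul_adjugate_eq (X : k[X]) A' x'
  refine ⟨A' * x' - x' * A' + (X : k[X]) • F, ?_,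
    (eventually_eval_ne_zero hdet0).mono fun t ht => ?_⟩
  · simp only [A', x', map_add, map_sub, map_mul, mapMatrix_eval_smul, mapMatrix_eval_map_C,
      eval_X, zero_smul, add_zero]
  · rw [hdet] at ht
    refine ⟨_, ht, 1 + t • A, _, smul_mul_adjugate_mul_eq_one ht, ?_⟩
    have hval := congrArg (evalRingHom t).mapMatrix hF
    simp only [x', A', map_add, map_sub, map_one, map_mul, mapMatrix_eval_smul,
      mapMatrix_eval_map_C, eval_X, RingHom.map_adjugate] at hval ⊢
    rw [← hval, mul_smul_comm, smul_smul, mul_inv_cancel₀ ht, one_smul]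

theorem exists_eq_commutator_add_commutator {x y : Matrix n n k}
    (h : ∀ C, Commute C x → Commute C y → ∃ c, C = scalar n c) {D : Matrix n n k}
    (hD : D.trace = 0) : ∃ A B, D = (A * x - x * A) + (B * y - y * B) := by
  let φ : (Matrix n n k × Matrix n n k) →ₗ[k] Matrix n n k :=
    (LinearMap.mulRight k x - LinearMap.mulLeft k x).coprod
      (LinearMap.mulRight k y - LinearMap.mulLeft k y)
  suffices D ∈ LinearMap.range φ by
    obtain ⟨⟨A, B⟩, rfl⟩ := this
    exact ⟨A, B, rfl⟩
  by_contra hmem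
  obtain ⟨f, hf, hφ⟩ := Submodule.exists_le_ker_of_notMem hmem
  obtain ⟨C, hC⟩ := exists_dual_eq_trace_mul f
  have hzero : ∀ A B, trace (C * ((A * x - x * A) + (B * y - y * B))) = 0 := fun A B => by
    rw [← hC]
    exact hφ ⟨(A, B), rfl⟩
  obtain ⟨c, rfl⟩ := h C
    (commute_of_trace_mul_commutator fun A => by simpa using hzero A 0)
    (commute_of_trace_mul_commutator fun B => by simpa using hzero 0 B)
  refine hf ?_
  rw [hC, scalar_apply, ← smul_one_eq_diagonal, smul_mul_assoc, one_mul, trace_smul, hD, smul_zero]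

end Conjugation

section Secant

section CommRing

variable {R : Type*} [CommRing R] {N : ℕ} {S : Set (Matrix (Fin N) (Fin N) R)}

/-- A set of matrices stable under conjugation and under nonzero scalars. The conjugating matrix
comes with a one-sided inverse, so that no matrix inverse has to be formed. -/
def IsConjStableCone (S : Set (Matrix (Fin N) (Fin N) R)) : Prop :=
  ∀ u ≠ (0 : R), ∀ g g' : Matrix (Fin N) (Fin N) R, g' * g = 1 →
    ∀ x ∈ S, u • (g * x * g') ∈ S

theorem trace_eq_zero_of_mem_zClosure (hS : ∀ x ∈ S, x.trace = 0) {M : Matrix (Fin N) (Fin N) R}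
    (hM : M ∈ zClosure S) : M.trace = 0 := by
  have h := hM (∑ i, MvPolynomial.X (i, i)) fun x hx => by
    simpa [trace] using hS x hx
  simpa [trace] using h

theorem trace_eq_zero_of_mem_zClosure_image2 (hS : ∀ x ∈ S, x.trace = 0)
    {M : Matrix (Fin N) (Fin N) R} (hM : M ∈ zClosure (Set.image2 (· + ·) S S)) :
    M.trace = 0 :=
  trace_eq_zero_of_mem_zClosure (Set.forall_mem_image2.mpr fun x hx y hy => by
    rw [trace_add, hS x hx, hS y hy, add_zero]) hM

end CommRing

variable {k : Type*} [Field k] {N : ℕ} {S : Set (Matrix (Fin N) (Fin N) k)}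

theorem exists_curve_in_zClosure (hS : IsConjStableCone S)
    {x : Matrix (Fin N) (Fin N) k} (hx : x ∈ zClosure S) (A : Matrix (Fin N) (Fin N) k) :
    ∃ E : Matrix (Fin N) (Fin N) k[X], (evalRingHom 0).mapMatrix E = A * x - x * A ∧
      ∀ᶠ t in cofinite, x + t • (evalRingHom t).mapMatrix E ∈ zClosure S := by
  obtain ⟨E, hE, hcurve⟩ := exists_conj_curve A x
  refine ⟨E, hE, hcurve.mono fun t => ?_⟩
  rintro ⟨u, hu, g, g', hg, ht⟩
  have hmaps : Set.MapsTo (fun y => u • g * y * g') S S := fun y hy => by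
    simpa only [smul_mul_assoc] using hS u hu g g' hg y hy
  simpa only [ht, smul_mul_assoc] using mapsTo_mul_mul_zClosure (u • g) g' hmaps hx

theorem zClosure_image2_add_eq_trace_zero [Infinite k] (hS : IsConjStableCone S)
    (htr : ∀ x ∈ S, x.trace = 0) {x y : Matrix (Fin N) (Fin N) k}
    (hx : x ∈ zClosure S) (hy : y ∈ zClosure S)
    (hxy : ∀ C, Commute C x → Commute C y → ∃ c, C = scalar (Fin N) c) :
    zClosure (Set.image2 (· + ·) S S) = {M | M.trace = 0} := by
  refine Set.Subset.antisymm (fun M => trace_eq_zero_of_mem_zClosure_image2 htr) fun M hM => ?_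
  have hB : (x + y).trace = 0 :=
    trace_eq_zero_of_mem_zClosure_image2 htr (add_mem_zClosure_image2 hx hy)
  rw [← add_sub_cancel (x + y) M]
  refine add_mem_zClosure_of_curves (V := {D | D.trace = 0}) (fun D hD => ?_) (by
    rw [Set.mem_ofPred_eq, trace_sub, hB, sub_zero]; exact hM)
  obtain ⟨A, B, rfl⟩ := exists_eq_commutator_add_commutator hxy hD
  obtain ⟨E, hE, hcurveE⟩ := exists_curve_in_zClosure hS hx A
  obtain ⟨F, hF, hcurveF⟩ := exists_curve_in_zClosure hS hy B
  refine ⟨E + F, by rw [map_add, hE, hF], ?_⟩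
  filter_upwards [hcurveE, hcurveF, eventually_cofinite_ne 0] with t htE htF ht
  have hmem : x + y + t • (evalRingHom t).mapMatrix (E + F) ∈
      zClosure (Set.image2 (· + ·) S S) := by
    convert add_mem_zClosure_image2 htE htF using 1
    rw [map_add, smul_add]
    abel
  have htrace := trace_eq_zero_of_mem_zClosure_image2 htr hmem
  rw [trace_add, hB, zero_add, trace_smul, smul_eq_mul] at htrace
  exact ⟨(mul_eq_zero.mp htrace).resolve_left ht, hmem⟩

end Secant

section Orbit

variable {k : Type*} [Field k] {N p : ℕ} {lam : Fin p → ℕ}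

theorem isConjStableCone_jordanOrbit : IsConjStableCone (jordanOrbit k N lam) := by
  intro u hu g g' hg x hx i hi
  let v : (Matrix (Fin N) (Fin N) k)ˣ := ⟨g, g', mul_eq_one_comm.mp hg, hg⟩
  have hpow : (u • (g * x * g')) ^ i = u ^ i • (g * x ^ i * g') :=
    (_root_.smul_pow u _ i).trans (congrArg _ (Units.conj_pow v x i))
  rw [hpow, rank_smul_of_mem_nonZeroDivisors _
      (mem_nonZeroDivisors_of_ne_zero (pow_ne_zero i hu)),
    rank_mul_eq_left_of_isUnit_det _ _ (isUnit_det_of_right_inverse hg),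
    rank_mul_eq_right_of_isUnit_det _ _ (isUnit_det_of_left_inverse hg), hx i hi]

theorem transpose_mem_jordanOrbit {x : Matrix (Fin N) (Fin N) k} (hx : x ∈ jordanOrbit k N lam) :
    xᵀ ∈ jordanOrbit k N lam := fun i hi => by
  rw [← transpose_pow, rank_transpose, hx i hi]

theorem sum_sub_eq_zero_of_sum_le {ι : Type*} [Fintype ι] {f : ι → ℕ} {i : ℕ}
    (h : ∑ l, f l ≤ i) : ∑ l, (f l - i) = 0 :=
  Finset.sum_eq_zero fun l _ => Nat.sub_eq_zero_of_le
    ((Finset.single_le_sum (fun _ _ => Nat.zero_le _) (Finset.mem_univ l)).trans h)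

theorem trace_eq_zero_of_mem_jordanOrbit {x : Matrix (Fin N) (Fin N) k}
    (hx : x ∈ jordanOrbit k N lam) : x.trace = 0 := by
  have hrank : (x ^ (∑ l, lam l + 1)).rank = 0 := by
    rw [hx _ (by omega), sum_sub_eq_zero_of_sum_le (Nat.le_succ _)]
  have hpow : x ^ (∑ l, lam l + 1) = 0 := by
    rw [rank, Submodule.finrank_eq_zero, LinearMap.range_eq_bot] at hrank
    exact toLin'.injective (by rw [toLin'_apply', hrank, map_zero])
  exact (isNilpotent_trace_of_isNilpotent ⟨_, hpow⟩).eq_zero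

end Orbit

section Levels

variable {R n : Type*} [Semiring R] {lev : n → ℕ}

/-- The entries of `x` are nonzero only where the level of the row exceeds that of the column:
`x` maps each basis vector to a combination of basis vectors of higher level. For the levels
given by Jordan chains of type `λ`, it puts `x` in the closure of `O_λ`. -/
def RaisesLevel (lev : n → ℕ) (x : Matrix n n R) : Prop :=
  ∀ a b, x a b ≠ 0 → lev b < lev a

theorem RaisesLevel.add {x y : Matrix n n R} (hx : RaisesLevel lev x) (hy : RaisesLevel lev y) :
    RaisesLevel lev (x + y) := fun a b h => by
  by_contra hab
  have hxy : x a b = 0 ∧ y a b = 0 :=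
    ⟨not_not.mp (mt (hx a b) hab), not_not.mp (mt (hy a b) hab)⟩
  exact h (by rw [Matrix.add_apply, hxy.1, hxy.2, add_zero])

theorem RaisesLevel.smul {x : Matrix n n R} (hx : RaisesLevel lev x) (c : R) :
    RaisesLevel lev (c • x) := fun a b h => hx a b (right_ne_zero_of_mul h)

variable [Fintype n] [DecidableEq n]

theorem RaisesLevel.level_add_le_of_pow_apply_ne_zero {x : Matrix n n R} (hx : RaisesLevel lev x)
    (i : ℕ) {a b : n} (h : (x ^ i) a b ≠ 0) : lev b + i ≤ lev a := by
  induction i generalizing a b with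
  | zero =>
    have hab : a = b := by
      by_contra hab
      exact h (one_apply_ne hab)
    exact hab ▸ le_rfl
  | succ i ih =>
    rw [pow_succ, mul_apply] at h
    obtain ⟨c, -, hc⟩ := Finset.exists_ne_zero_of_sum_ne_zero h
    have h1 := ih (left_ne_zero_of_mul hc)
    have h2 := hx c b (right_ne_zero_of_mul hc)
    omega

variable {k : Type*} [Field k]

theorem RaisesLevel.rank_pow_le {x : Matrix n n k} (hx : RaisesLevel lev x) (i : ℕ) :
    (x ^ i).rank ≤ (Finset.univ.filter fun a => i ≤ lev a).card := by
  refine rank_le_card_of_support_subset _ _ fun a ha => ?_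
  obtain ⟨b, hb⟩ := Function.ne_iff.mp ha
  have := hx.level_add_le_of_pow_apply_ne_zero i hb
  rw [Finset.mem_coe, Finset.mem_filter]
  exact ⟨Finset.mem_univ a, by omega⟩

theorem eventually_card_le_rank {ι : Type*} [Fintype ι] [DecidableEq ι] (Γ : Matrix n n k[X])
    (r c : ι → n) {t₀ : k} (h : (((evalRingHom t₀).mapMatrix Γ).submatrix r c).det ≠ 0) :
    ∀ᶠ t in cofinite, Fintype.card ι ≤ ((evalRingHom t).mapMatrix Γ).rank := by
  have hdet : ∀ t, (((evalRingHom t).mapMatrix Γ).submatrix r c).det =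
      (Γ.submatrix r c).det.eval t := fun t => by
    rw [← coe_evalRingHom, RingHom.map_det]
    rfl
  have hne : (Γ.submatrix r c).det ≠ 0 := fun h0 => h (by rw [hdet, h0, eval_zero])
  refine (eventually_eval_ne_zero hne).mono fun t ht => ?_
  rw [← hdet] at ht
  rw [← rank_of_isUnit _ ((isUnit_iff_isUnit_det _).mpr ht.isUnit)]
  exact rank_submatrix_le _ r c

end Levels

section Cells

variable {ι : Type*} {lam : ι → ℕ}

theorem cell_ext {c d : Σ l, Fin (lam l)} (h1 : c.1 = d.1) (h2 : (c.2 : ℕ) = d.2) : c = d := by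
  obtain ⟨l, i⟩ := c
  obtain ⟨l', j⟩ := d
  dsimp only at h1 h2
  subst h1
  rw [Fin.ext h2]

theorem card_le_level [Fintype ι] (i : ℕ) :
    (Finset.univ.filter fun c : Σ l, Fin (lam l) => i ≤ (c.2 : ℕ)).card = ∑ l, (lam l - i) := by
  rw [Finset.card_filter, Fintype.sum_sigma]
  refine Finset.sum_congr rfl fun l _ => ?_
  dsimp only
  rw [Fin.sum_univ_eq_sum_range (fun j => if i ≤ j then 1 else 0), ← Finset.card_filter]
  have : (Finset.range (lam l)).filter (fun j => i ≤ j) = Finset.Ico i (lam l) := by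
    ext j
    simp [and_comm]
  rw [this, Nat.card_Ico]

variable {R : Type*} [Semiring R] [DecidableEq ι]

/-- The nilpotent matrix in Jordan normal form with blocks of sizes `lam l`. It is indexed by the
cells `⟨l, j⟩` of the Young diagram and takes the basis vector of each cell to that of the next cell
in its row; the level of a cell is its position `j` in the row. -/
def jordanMatrix (R : Type*) [Semiring R] (lam : ι → ℕ) :
    Matrix (Σ l, Fin (lam l)) (Σ l, Fin (lam l)) R :=
  of fun c d => if c.1 = d.1 ∧ (c.2 : ℕ) = d.2 + 1 then 1 else 0

theorem raisesLevel_jordanMatrix : RaisesLevel (fun c => (c.2 : ℕ)) (jordanMatrix R lam) :=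
  fun c d h => by
    have := (ite_ne_right_iff.mp h).1.2
    dsimp only
    omega

variable [Fintype ι]

theorem jordanMatrix_pow_apply (i : ℕ) (c d : Σ l, Fin (lam l)) :
    (jordanMatrix R lam ^ i) c d = if c.1 = d.1 ∧ (c.2 : ℕ) = d.2 + i then 1 else 0 := by
  induction i generalizing c with
  | zero =>
    rw [pow_zero, one_apply]
    refine if_congr ⟨?_, fun h => cell_ext h.1 h.2⟩ rfl rfl
    rintro rfl
    exact ⟨rfl, rfl⟩
  | succ i ih =>
    rw [pow_succ', mul_apply]
    by_cases hcd : c.1 = d.1 ∧ (c.2 : ℕ) = d.2 + (i + 1)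
    · rw [if_pos hcd, Finset.sum_eq_single (⟨c.1, ⟨d.2 + i, by omega⟩⟩ : Σ l, Fin (lam l)), ih,
        if_pos ⟨hcd.1, rfl⟩, mul_one]
      · exact if_pos ⟨rfl, by dsimp only; omega⟩
      · intro e _ he
        rw [ih, mul_ite, mul_zero]
        exact if_neg fun h => he (cell_ext (h.1.trans hcd.1.symm) h.2)
      · exact fun h => (h (Finset.mem_univ _)).elim
    · rw [if_neg hcd]
      refine Finset.sum_eq_zero fun e _ => ?_
      rw [ih, jordanMatrix, of_apply, ite_zero_mul_ite_zero]
      exact if_neg fun h => hcd ⟨h.1.1.trans h.2.1, by omega⟩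

theorem exists_submatrix_jordanMatrix_pow_eq_one (i : ℕ) :
    ∃ r c : {c : Σ l, Fin (lam l) // i ≤ (c.2 : ℕ)} → Σ l, Fin (lam l),
      (jordanMatrix R lam ^ i).submatrix r c = 1 := by
  refine ⟨Subtype.val, fun c => ⟨c.1.1, ⟨c.1.2 - i, by omega⟩⟩, ?_⟩
  ext c d
  rw [submatrix_apply, jordanMatrix_pow_apply, one_apply]
  refine if_congr ⟨fun h => ?_, ?_⟩ rfl rfl
  · have := d.2
    exact Subtype.ext (cell_ext h.1 (by have := h.2; dsimp only at this; omega))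
  · rintro rfl
    have := c.2
    exact ⟨rfl, by dsimp only; omega⟩

variable {k : Type*} [Field k]

theorem RaisesLevel.eventually_rank_pow_eq {z : Matrix (Σ l, Fin (lam l)) (Σ l, Fin (lam l)) k}
    (hz : RaisesLevel (fun c => (c.2 : ℕ)) z) (i : ℕ) : ∀ᶠ t : k in cofinite,
      (((1 - t) • jordanMatrix k lam + t • z) ^ i).rank = ∑ l, (lam l - i) := by
  let Γ : Matrix (Σ l, Fin (lam l)) (Σ l, Fin (lam l)) k[X] :=
    (1 - X : k[X]) • (jordanMatrix k lam).map C + (X : k[X]) • z.map C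
  have hΓ : ∀ t, (evalRingHom t).mapMatrix Γ = (1 - t) • jordanMatrix k lam + t • z := fun t => by
    simp only [Γ, map_add, mapMatrix_eval_smul, mapMatrix_eval_map_C, eval_sub, eval_one, eval_X]
  obtain ⟨r, c, hrc⟩ := exists_submatrix_jordanMatrix_pow_eq_one (R := k) (lam := lam) i
  have hrank := eventually_card_le_rank (Γ ^ i) r c (t₀ := 0) (by
    rw [map_pow, hΓ, sub_zero, one_smul, zero_smul, add_zero, hrc, det_one]
    exact one_ne_zero)
  refine hrank.mono fun t ht => ?_
  rw [map_pow, hΓ, Fintype.card_subtype, card_le_level] at ht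
  refine le_antisymm ?_ ht
  rw [← card_le_level]
  exact ((raisesLevel_jordanMatrix.smul _).add (hz.smul t)).rank_pow_le i

end Cells

section Numbering

variable {k : Type*} [Field k] {N p : ℕ} {lam : Fin p → ℕ}

theorem submatrix_equiv_mem_jordanOrbit (σ : Fin N ≃ Σ l, Fin (lam l))
    {x : Matrix (Σ l, Fin (lam l)) (Σ l, Fin (lam l)) k}
    (hx : ∀ i, 1 ≤ i → (x ^ i).rank = ∑ l, (lam l - i)) :
    x.submatrix σ σ ∈ jordanOrbit k N lam := fun i hi => by
  rw [← hx i hi, ← rank_submatrix (x ^ i) σ σ]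
  exact congrArg rank (map_pow (reindexAlgEquiv k k σ.symm) x i).symm

theorem RaisesLevel.eventually_forall_rank_pow_eq
    {z : Matrix (Σ l, Fin (lam l)) (Σ l, Fin (lam l)) k}
    (hz : RaisesLevel (fun c => (c.2 : ℕ)) z) : ∀ᶠ t : k in cofinite, ∀ i,
      (((1 - t) • jordanMatrix k lam + t • z) ^ i).rank = ∑ l, (lam l - i) := by
  refine ((Filter.eventually_all_finset (Finset.range (∑ l, lam l))).mpr fun i _ =>
    hz.eventually_rank_pow_eq i).mono fun t ht i => ?_
  by_cases hi : i < ∑ l, lam l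
  · exact ht i (Finset.mem_range.mpr hi)
  have hzero : ∑ l, (lam l - i) = 0 := sum_sub_eq_zero_of_sum_le (not_lt.mp hi)
  rw [hzero, ← Nat.le_zero, ← hzero, ← card_le_level]
  exact ((raisesLevel_jordanMatrix.smul _).add (hz.smul t)).rank_pow_le i

theorem RaisesLevel.mem_zClosure_jordanOrbit [Infinite k] (σ : Fin N ≃ Σ l, Fin (lam l))
    {z : Matrix (Fin N) (Fin N) k} (hz : RaisesLevel (fun a => ((σ a).2 : ℕ)) z) :
    z ∈ zClosure (jordanOrbit k N lam) := by
  let w := z.submatrix σ.symm σ.symm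
  have hw : RaisesLevel (fun c => (c.2 : ℕ)) w := fun c d h => by
    have hlev : ((σ (σ.symm d)).2 : ℕ) < (σ (σ.symm c)).2 := hz _ _ h
    rwa [Equiv.apply_symm_apply, Equiv.apply_symm_apply] at hlev
  have hzw : w.submatrix σ σ = z := by
    ext a b
    simp only [w, submatrix_apply, Equiv.symm_apply_apply]
  let Γ : Matrix (Fin N) (Fin N) k[X] :=
    (1 - X : k[X]) • ((jordanMatrix k lam).submatrix σ σ).map C + (X : k[X]) • z.map C
  have hΓ : ∀ t, (evalRingHom t).mapMatrix Γ =
      ((1 - t) • jordanMatrix k lam + t • w).submatrix σ σ := fun t => by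
    simp only [Γ, map_add, mapMatrix_eval_smul, mapMatrix_eval_map_C, eval_sub, eval_one, eval_X]
    rw [← hzw]
    rfl
  have hmem := mem_zClosure_of_curve (S := jordanOrbit k N lam) Γ
    (hw.eventually_forall_rank_pow_eq.mono fun t ht => by
      rw [hΓ]; exact submatrix_equiv_mem_jordanOrbit σ fun i _ => ht i) 1
  rwa [hΓ, sub_self, zero_smul, zero_add, one_smul, hzw] at hmem

theorem exists_monotone_cell_numbering (hsum : ∑ l, lam l = N) :
    ∃ σ : Fin N ≃ Σ l, Fin (lam l), Monotone fun a => ((σ a).2 : ℕ) := by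
  have e : Fin N ≃ Σ l, Fin (lam l) := Fintype.equivOfCardEq (by simp [hsum])
  exact ⟨(Tuple.sort fun a => ((e a).2 : ℕ)).trans e,
    Tuple.monotone_sort fun a => ((e a).2 : ℕ)⟩

variable {σ : Fin N ≃ Σ l, Fin (lam l)}

theorem run_length_le_card (hσ : Monotone fun a => ((σ a).2 : ℕ)) {a b : Fin N}
    (hab : ((σ b).2 : ℕ) ≤ (σ a).2) :
    (b : ℕ) + 1 - a ≤ (Finset.univ.filter fun l => ((σ a).2 : ℕ) < lam l).card := by
  have hlevel : ∀ c ∈ Finset.Icc a b, ((σ c).2 : ℕ) = (σ a).2 := fun c hc =>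
    le_antisymm ((hσ (Finset.mem_Icc.mp hc).2).trans hab) (hσ (Finset.mem_Icc.mp hc).1)
  rw [← Fin.card_Icc]
  refine Finset.card_le_card_of_injOn (fun c => (σ c).1) (fun c hc => ?_) fun c hc d hd hcd => ?_
  · exact Finset.mem_filter.mpr ⟨Finset.mem_univ _, hlevel c hc ▸ (σ c).2.isLt⟩
  · exact σ.injective (cell_ext hcd ((hlevel c hc).trans (hlevel d hd).symm))

theorem level_lt_of_add_half_le (hσ : Monotone fun a => ((σ a).2 : ℕ)) (hp : 2 * p ≤ N)
    {a b : Fin N} (hab : (a : ℕ) + N / 2 ≤ b) : ((σ a).2 : ℕ) < (σ b).2 := by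
  by_contra! h
  have hrun := run_length_le_card hσ h
  have hrows := (Finset.univ.filter fun l => ((σ a).2 : ℕ) < lam l).card_le_univ
  rw [Fintype.card_fin] at hrows
  omega

theorem two_le_level_last (hσ : Monotone fun a => ((σ a).2 : ℕ)) {l₀ : Fin p}
    (hl₀ : 3 ≤ lam l₀) {b : Fin N} (hb : (b : ℕ) = N - 1) : 2 ≤ ((σ b).2 : ℕ) := by
  obtain ⟨c, hc⟩ := σ.surjective ⟨l₀, ⟨2, hl₀⟩⟩
  have hcb : c ≤ b := Fin.le_def.mpr (by omega)
  calc 2 = ((σ c).2 : ℕ) := by rw [hc]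
    _ ≤ _ := hσ hcb

theorem level_half_lt_level_last (hσ : Monotone fun a => ((σ a).2 : ℕ)) {l₀ : Fin p}
    (hl₀ : 3 ≤ lam l₀) {a b : Fin N} (ha : (a : ℕ) = N / 2) (hb : (b : ℕ) = N - 1) :
    ((σ a).2 : ℕ) < (σ b).2 := by
  by_contra! h
  have hrun := run_length_le_card hσ h
  have htop := (two_le_level_last hσ hl₀ hb).trans h
  -- Each row counted in the run has at least three cells, too many for a diagram of size `N`.
  have hcells : (Finset.univ.filter fun l => ((σ a).2 : ℕ) < lam l).card * 3 ≤ N := by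
    have hsum : ∑ l, lam l = N := by simpa using (Fintype.card_congr σ).symm
    refine ((Finset.card_nsmul_le_sum _ lam 3 fun l hl => ?_).trans
      (Finset.sum_le_sum_of_subset (Finset.subset_univ _))).trans_eq hsum
    have := (Finset.mem_filter.mp hl).2
    omega
  omega

theorem mem_zClosure_jordanOrbit_of_support [Infinite k] (hsum : ∑ l, lam l = N) {l₀ : Fin p}
    (hl₀ : 3 ≤ lam l₀) (hp : 2 * p ≤ N) {z : Matrix (Fin N) (Fin N) k}
    (hz : ∀ a b : Fin N, z a b ≠ 0 →
      (b : ℕ) + N / 2 ≤ a ∨ (b : ℕ) = N / 2 ∧ (a : ℕ) = N - 1) :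
    z ∈ zClosure (jordanOrbit k N lam) := by
  obtain ⟨σ, hσ⟩ := exists_monotone_cell_numbering hsum
  refine RaisesLevel.mem_zClosure_jordanOrbit σ fun a b hab => ?_
  rcases hz a b hab with h | ⟨hb, ha⟩
  · exact level_lt_of_add_half_le hσ hp h
  · exact level_half_lt_level_last hσ hl₀ hb ha

end Numbering

section Pair

variable {R : Type*} [CommRing R] {N : ℕ}

/-- The `j`-th standard basis vector of `R ^ N`; it vanishes for `j ≥ N`, so that the index may
range over `ℕ`. -/
def basisVec (R : Type*) [CommRing R] (N j : ℕ) : Fin N → R :=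
  fun a => if (a : ℕ) = j then 1 else 0

/-- The matrix moving each basis vector `N / 2` steps forward, except that the one in
position `N / 2` goes to the last position. Its square is the elementary matrix taking the first
basis vector to the last; only scalars commute with both it and `backwardMatrix`. -/
def forwardMatrix (R : Type*) [CommRing R] (N : ℕ) : Matrix (Fin N) (Fin N) R :=
  of fun a b => if (a : ℕ) = b + N / 2 ∨ (b : ℕ) = N / 2 ∧ (a : ℕ) = N - 1 then 1 else 0

/-- The matrix taking each basis vector to the sum of those `N / 2` and `N / 2 + 1` steps
backward. -/
def backwardMatrix (R : Type*) [CommRing R] (N : ℕ) : Matrix (Fin N) (Fin N) R :=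
  of fun a b => if (b : ℕ) = a + N / 2 ∨ (b : ℕ) = a + N / 2 + 1 then 1 else 0

theorem basisVec_eq_single {j : ℕ} (hj : j < N) : basisVec R N j = Pi.single ⟨j, hj⟩ 1 := by
  ext a
  rw [Pi.single_apply]
  exact if_congr (Fin.ext_iff (b := ⟨j, hj⟩)).symm rfl rfl

theorem basisVec_eq_zero {j : ℕ} (hj : N ≤ j) : basisVec R N j = 0 :=
  funext fun a => if_neg (by omega)

theorem forwardMatrix_mulVec_basisVec {j : ℕ} (hj : j < N) (hjN : j ≠ N / 2) :
    forwardMatrix R N *ᵥ basisVec R N j = basisVec R N (j + N / 2) := by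
  rw [basisVec_eq_single hj, mulVec_single_one]
  exact funext fun a => if_congr (by dsimp only; omega) rfl rfl

theorem forwardMatrix_mulVec_basisVec_half (hN : 0 < N) :
    forwardMatrix R N *ᵥ basisVec R N (N / 2) = basisVec R N (N - 1) := by
  rw [basisVec_eq_single (Nat.div_lt_self hN one_lt_two), mulVec_single_one]
  exact funext fun a => if_congr (by dsimp only; omega) rfl rfl

theorem backwardMatrix_mulVec_basisVec_half (hN : 0 < N) :
    backwardMatrix R N *ᵥ basisVec R N (N / 2) = basisVec R N 0 := by
  rw [basisVec_eq_single (Nat.div_lt_self hN one_lt_two), mulVec_single_one]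
  exact funext fun a => if_congr (by dsimp only; omega) rfl rfl

theorem backwardMatrix_mulVec_basisVec {j : ℕ} (hj : j + N / 2 + 1 < N) :
    backwardMatrix R N *ᵥ basisVec R N (j + N / 2 + 1) = basisVec R N (j + 1) + basisVec R N j := by
  rw [basisVec_eq_single hj, mulVec_single_one]
  ext a
  simp only [backwardMatrix, basisVec, col_apply, of_apply, Pi.add_apply]
  split_ifs <;> first | omega | simp

theorem forwardMatrix_mulVec_backwardMatrix_mulVec {j : ℕ} (hj : j + N / 2 + 1 < N) :
    forwardMatrix R N *ᵥ (backwardMatrix R N *ᵥ basisVec R N (j + N / 2 + 1)) =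
      basisVec R N (j + N / 2 + 1) + basisVec R N (j + N / 2) := by
  rw [backwardMatrix_mulVec_basisVec hj, mulVec_add,
    forwardMatrix_mulVec_basisVec (by omega : j < N) (by omega)]
  congr 1
  by_cases hhalf : j + 1 = N / 2
  · rw [hhalf, forwardMatrix_mulVec_basisVec_half (by omega)]
    congr 1
    omega
  · rw [forwardMatrix_mulVec_basisVec (by omega) hhalf, add_right_comm]

theorem forwardMatrix_sq_mulVec_basisVec_zero (hN : 2 ≤ N) :
    forwardMatrix R N ^ 2 *ᵥ basisVec R N 0 = basisVec R N (N - 1) := by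
  rw [pow_two, ← mulVec_mulVec, forwardMatrix_mulVec_basisVec (by omega) (by omega), zero_add,
    forwardMatrix_mulVec_basisVec_half (by omega)]

theorem forwardMatrix_sq_mulVec_basisVec_of_pos (hN : 3 ≤ N) {j : ℕ} (hj : j < N) (hj0 : 0 < j) :
    forwardMatrix R N ^ 2 *ᵥ basisVec R N j = 0 := by
  rw [pow_two, ← mulVec_mulVec]
  by_cases hhalf : j = N / 2
  · rw [hhalf, forwardMatrix_mulVec_basisVec_half (by omega),
      forwardMatrix_mulVec_basisVec (by omega) (by omega), basisVec_eq_zero (by omega)]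
  rw [forwardMatrix_mulVec_basisVec hj hhalf]
  by_cases hjN : j + N / 2 < N
  · rw [forwardMatrix_mulVec_basisVec hjN (by omega), basisVec_eq_zero (by omega)]
  · rw [basisVec_eq_zero (not_lt.mp hjN), mulVec_zero]

theorem forwardMatrix_sq (hN : 3 ≤ N) :
    forwardMatrix R N ^ 2 = single ⟨N - 1, by omega⟩ ⟨0, by omega⟩ 1 := by
  refine ext_of_mulVec_single fun b => ?_
  rw [single_mulVec_eq, one_mul, Pi.single_apply, ← basisVec_eq_single b.isLt,
    ← basisVec_eq_single]
  split_ifs with hb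
  · rw [← hb, one_smul, forwardMatrix_sq_mulVec_basisVec_zero (by omega)]
  · rw [zero_smul, forwardMatrix_sq_mulVec_basisVec_of_pos hN b.isLt]
    exact Nat.pos_of_ne_zero fun h => hb (Fin.ext h.symm)

theorem eq_zero_of_mulVec_basisVec_eq_zero {D : Matrix (Fin N) (Fin N) R}
    (hD : ∀ j < N, D *ᵥ basisVec R N j = 0) : D = 0 :=
  ext_of_mulVec_single fun b => by
    rw [zero_mulVec, ← hD b b.isLt, basisVec_eq_single b.isLt]

theorem eq_zero_of_commute_of_mulVec_last_eq_zero (hN : 0 < N) {D : Matrix (Fin N) (Fin N) R}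
    (hX : Commute D (backwardMatrix R N)) (hY : Commute D (forwardMatrix R N))
    (hlast : D *ᵥ basisVec R N (N - 1) = 0) : D = 0 := by
  have hstable : ∀ {M : Matrix (Fin N) (Fin N) R} {v : Fin N → R}, Commute D M → D *ᵥ v = 0 →
      D *ᵥ (M *ᵥ v) = 0 := fun {M v} hM hv => by
    rw [mulVec_mulVec, hM.eq, ← mulVec_mulVec, hv, mulVec_zero]
  have hhigh : ∀ j, N / 2 ≤ j → j ≤ N - 1 → D *ᵥ basisVec R N j = 0 := fun j hj hjN => by
    induction hjN using Nat.decreasingInduction with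
    | self => exact hlast
    | of_succ j hjN ih =>
      obtain ⟨i, rfl⟩ := Nat.exists_eq_add_of_le' hj
      have hsum := hstable hY (hstable hX (ih (by omega)))
      rwa [forwardMatrix_mulVec_backwardMatrix_mulVec (by omega), mulVec_add, ih (by omega),
        zero_add] at hsum
  have hlow : ∀ j < N / 2, D *ᵥ basisVec R N j = 0 := fun j hj => by
    induction j with
    | zero =>
      rw [← backwardMatrix_mulVec_basisVec_half hN]
      exact hstable hX (hhigh _ le_rfl (by omega))
    | succ j ih =>
      have hsum := hstable hX (hhigh (j + N / 2 + 1) (by omega) (by omega))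
      rwa [backwardMatrix_mulVec_basisVec (by omega), mulVec_add, ih (by omega), add_zero] at hsum
  exact eq_zero_of_mulVec_basisVec_eq_zero fun j hj =>
    (lt_or_ge j (N / 2)).elim (hlow j) fun h => hhigh j h (by omega)

theorem eq_scalar_of_commute_backwardMatrix_forwardMatrix (hN : 3 ≤ N)
    {C : Matrix (Fin N) (Fin N) R}
    (hX : Commute C (backwardMatrix R N)) (hY : Commute C (forwardMatrix R N)) :
    ∃ c, C = scalar (Fin N) c := by
  let first : Fin N := ⟨0, by omega⟩
  let last : Fin N := ⟨N - 1, by omega⟩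
  have hC : Commute (single last first 1) C := forwardMatrix_sq (R := R) hN ▸ (hY.pow_right 2).symm
  have hlast : (C - scalar (Fin N) (C last last)) *ᵥ basisVec R N (N - 1) = 0 := by
    rw [basisVec_eq_single last.isLt, mulVec_single_one]
    ext a
    by_cases ha : a = last
    · simp [ha, last]
    · simpa [ha, last] using col_eq_zero_of_commute_single hC ha
  refine ⟨C last last, sub_eq_zero.mp (eq_zero_of_commute_of_mulVec_last_eq_zero (by omega)
    (hX.sub_left ?_) (hY.sub_left ?_) hlast)⟩
  all_goals exact scalar_commute _ (Commute.all _) _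

end Pair

theorem stmt0_general {k : Type*} [Field k] [Infinite k] {N p : ℕ} {lam : Fin p → ℕ}
    (hsum : ∑ l, lam l = N) {l₀ : Fin p} (hl₀ : 3 ≤ lam l₀) (hp : 2 * p ≤ N) :
    zClosure (Set.image2 (· + ·) (jordanOrbit k N lam) (jordanOrbit k N lam))
      = {M : Matrix (Fin N) (Fin N) k | Matrix.trace M = 0} := by
  have hN : 3 ≤ N :=
    hl₀.trans ((Finset.single_le_sum (fun _ _ => Nat.zero_le _) (Finset.mem_univ l₀)).trans_eq hsum)
  have hX : (backwardMatrix k N)ᵀ ∈ zClosure (jordanOrbit k N lam) :=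
    mem_zClosure_jordanOrbit_of_support hsum hl₀ hp fun a b hab => by
      rcases (ite_ne_right_iff.mp hab).1 with h | h <;> omega
  have hY : forwardMatrix k N ∈ zClosure (jordanOrbit k N lam) :=
    mem_zClosure_jordanOrbit_of_support hsum hl₀ hp fun a b hab =>
      (ite_ne_right_iff.mp hab).1.imp_left fun h => h.ge
  refine zClosure_image2_add_eq_trace_zero isConjStableCone_jordanOrbit
    (fun x => trace_eq_zero_of_mem_jordanOrbit)
    (mapsTo_transpose_zClosure (fun x => transpose_mem_jordanOrbit) hX) hY
    fun C hCX hCY => eq_scalar_of_commute_backwardMatrix_forwardMatrix hN hCX hCY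

/-- If `λ₁ ≥ 3` and `2(N − p) ≥ N`, then the conical secant variety of the nilpotent
orbit `O_λ ⊂ sl_N` is all of `sl_N`. -/
theorem stmt0 {k : Type*} [Field k] [IsAlgClosed k] [CharZero k]
    {N p : ℕ} (hN : 2 ≤ N) (hp : 0 < p) (lam : Fin p → ℕ)
    (hanti : Antitone lam) (hpos : ∀ l, 1 ≤ lam l)
    (hsum : ∑ l, lam l = N)
    (hl1 : 3 ≤ lam ⟨0, hp⟩)
    (hhalf : N ≤ 2 * (N - p)) :
    zClosure (Set.image2 (· + ·) (jordanOrbit k N lam) (jordanOrbit k N lam))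
      = {M : Matrix (Fin N) (Fin N) k | Matrix.trace M = 0} :=
  stmt0_general hsum hl1 (by omega)
end
end

section
/- Let k be an algebraically closed field of characteristic 0, and let λ = (2^r, 1^{N−2r}) with 1 ≤ r and 2r ≤ N. Then the Zariski closure in Mat_N(k) of the set {x + y : x, y ∈ O_λ} equals the set of matrices M ∈ Mat_N(k) such that rank(M) ≤ 2r and the coefficients of the characteristic polynomial of M in degrees N−1, N−3, …, N−2r+1 all vanish (equivalently, σ₁(M) = σ₃(M) = … = σ_{2r−1}(M) = 0, where σ_i are the elementary symmetric functions of the eigenvalues). -/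
open Matrix

noncomputable section

/-- The partition `(2^r, 1^{N-2r})` of `N`, with `N - r` parts. -/
def twoOneLam (N r : ℕ) : Fin (N - r) → ℕ := fun l => if (l : ℕ) < r then 2 else 1

/-!
Write `M = B * C` with `B` injective and `A = C * B` of size `2r`. If `A` is invertible and odd for
some `ℤ/2`-grading with even projection `p`, then `p * A * p = 0`, so `B * C` is the sum of the
square-zero matrices `B * p * C` and `B * (1 - p) * C`, both of rank `r`. Such a grading exists as
soon as `A` has a cyclic row vector `v` and an even characteristic polynomial: give `v * A ^ j`
the parity of `j`. In general `A` has eigenvalues `±aᵢ` and may be taken upper triangular; join it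
inside the upper triangular matrices with diagonal of the form `(c, -c)` to an invertible
bidiagonal matrix that has a cyclic vector. All but finitely many points of the line inherit both
properties, so `M` is a limit of sums.

Conversely, for `x ^ 2 = y ^ 2 = 0` and a central variable `s`, the identity
`s * (s + x) * (s - x - y) = (s ^ 2 - x * y) * (s - y)` shows that `s ^ N * det (s - x - y)` is a
polynomial in `s ^ 2`.
-/

section Orbit

variable {k : Type*} [Field k] {N r : ℕ}

theorem sum_twoOneLam_sub_one (h2r : 2 * r ≤ N) : ∑ l, (twoOneLam N r l - 1) = r := by
  have hindicator (l : Fin (N - r)) : twoOneLam N r l - 1 = if (l : ℕ) < r then 1 else 0 := by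
    unfold twoOneLam
    split_ifs <;> rfl
  simp only [hindicator, Finset.sum_boole, Nat.cast_id]
  rw [Fin.card_filter_val_lt]
  omega

theorem sum_twoOneLam_sub_eq_zero {i : ℕ} (hi : 2 ≤ i) : ∑ l, (twoOneLam N r l - i) = 0 := by
  refine Finset.sum_eq_zero fun l _ => ?_
  unfold twoOneLam
  split_ifs <;> omega

theorem matrix_rank_eq_zero {m n : Type*} [Finite m] [Fintype n]
    {A : Matrix m n k} :
    A.rank = 0 ↔ A = 0 := by
  classical
  rw [Matrix.rank, Submodule.finrank_eq_zero, LinearMap.range_eq_bot, ← toLin'_apply',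
    LinearEquiv.map_eq_zero_iff]

theorem mem_jordanOrbit_twoOneLam_iff (h2r : 2 * r ≤ N) {x : Matrix (Fin N) (Fin N) k} :
    x ∈ jordanOrbit k N (twoOneLam N r) ↔ x.rank = r ∧ x * x = 0 := by
  constructor
  · intro h
    have h1 := h 1 le_rfl
    have h2 := h 2 one_le_two
    rw [pow_one, sum_twoOneLam_sub_one h2r] at h1
    rw [sum_twoOneLam_sub_eq_zero le_rfl, matrix_rank_eq_zero, pow_two] at h2
    exact ⟨h1, h2⟩
  · rintro ⟨hrank, hsq⟩ i hi
    rcases hi.eq_or_lt with rfl | hi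
    · rw [pow_one, hrank, sum_twoOneLam_sub_one h2r]
    · rw [sum_twoOneLam_sub_eq_zero hi, pow_eq_zero_of_le hi (by rw [pow_two, hsq]), rank_zero]

end Orbit

section SquareZero

open Polynomial

variable {R : Type*} [CommRing R] {n : Type*} [Fintype n] [DecidableEq n]

theorem self_mul_add_mul_sub_add_of_mul_self_eq_zero {S : Type*} [Ring S] {s a b : S}
    (ha : Commute s a) (hb : Commute s b) (ha2 : a * a = 0) (hb2 : b * b = 0) :
    s * ((s + a) * (s - (a + b))) = (s ^ 2 - a * b) * (s - b) := by
  have hab : a * b * s = s * (a * b) := ((ha.mul_right hb).eq).symm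
  have habb : a * b * b = 0 := by rw [mul_assoc, hb2, mul_zero]
  have hleft : (s + a) * (s - (a + b)) = s ^ 2 - s * b - a * b := by
    simp only [add_mul, mul_sub, mul_add, ha2, ← ha.eq]
    noncomm_ring
  rw [hleft, sub_mul, mul_sub (a * b), hab, habb]
  noncomm_ring

theorem charpoly_of_mul_self_eq_zero [IsReduced R] {x : Matrix n n R} (hx : x * x = 0) :
    x.charpoly = X ^ Fintype.card n := by
  have hnil : IsNilpotent (x.charpoly - X ^ Fintype.card n) :=
    isNilpotent_charpoly_sub_pow_of_isNilpotent ⟨2, by rw [pow_two, hx]⟩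
  refine sub_eq_zero.mp (Polynomial.ext fun j => ?_)
  rw [coeff_zero, (Polynomial.isNilpotent_iff.mp hnil j).eq_zero]

theorem expand_two_charpoly (x : Matrix n n R) :
    expand R 2 x.charpoly = (scalar n X ^ 2 - x.map C).det := by
  rw [Matrix.charpoly, AlgHom.map_det]
  congr 1
  ext i j : 2
  rw [← map_pow]
  by_cases hij : i = j <;> simp [hij]

theorem X_pow_mul_charpoly_add_of_mul_self_eq_zero [IsReduced R] {x y : Matrix n n R}
    (hx : x * x = 0) (hy : y * y = 0) :
    X ^ Fintype.card n * (x + y).charpoly = expand R 2 (x * y).charpoly := by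
  let ι : Matrix n n R →+* Matrix n n R[X] := C.mapMatrix
  let s : Matrix n n R[X] := scalar n X
  have hcomm (z : Matrix n n R[X]) : Commute s z := scalar_commute _ (Commute.all _) z
  have hmatrix : s * (charmatrix (-x) * charmatrix (x + y))
      = (s ^ 2 - ι (x * y)) * charmatrix y := by
    simpa only [charmatrix, map_neg, map_add, map_mul, sub_neg_eq_add] using
      self_mul_add_mul_sub_add_of_mul_self_eq_zero (hcomm (ι x)) (hcomm (ι y))
        (by rw [← map_mul, hx, map_zero]) (by rw [← map_mul, hy, map_zero])
  have hdet : X ^ Fintype.card n * ((-x).charpoly * (x + y).charpoly)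
      = expand R 2 (x * y).charpoly * y.charpoly := by
    rw [expand_two_charpoly]
    simpa only [det_mul, Matrix.charpoly, s, ι, scalar_apply, det_diagonal, Finset.prod_const,
      Finset.card_univ, RingHom.mapMatrix_apply] using congrArg det hmatrix
  rw [charpoly_of_mul_self_eq_zero (by rw [neg_mul_neg, hx]), charpoly_of_mul_self_eq_zero hy,
    mul_comm (expand R 2 _)] at hdet
  exact (isRegular_X_pow _).left hdet

theorem charpoly_add_coeff_eq_zero_of_mul_self_eq_zero [IsReduced R] {x y : Matrix n n R}
    (hx : x * x = 0) (hy : y * y = 0) {j : ℕ} (hj : Odd (j + Fintype.card n)) :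
    (x + y).charpoly.coeff j = 0 := by
  rw [← coeff_X_pow_mul (x + y).charpoly (Fintype.card n) j,
    X_pow_mul_charpoly_add_of_mul_self_eq_zero hx hy, coeff_expand two_pos,
    if_neg hj.not_two_dvd_nat]

end SquareZero

section RankFactorization

variable {k : Type*} [Field k]

theorem exists_le_finrank_eq {V : Type*} [AddCommGroup V] [Module k V] [FiniteDimensional k V]
    (W : Submodule k V) {d : ℕ} (hW : Module.finrank k W ≤ d) (hd : d ≤ Module.finrank k V) :
    ∃ W', W ≤ W' ∧ Module.finrank k W' = d := by
  induction d, hW using Nat.le_induction with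
  | base => exact ⟨W, le_rfl, rfl⟩
  | succ d _ ih =>
    obtain ⟨W', hWW', rfl⟩ := ih (Nat.le_of_succ_le hd)
    obtain ⟨v, hv⟩ : ∃ v, v ∉ W' := by
      by_contra! htop
      rw [(Submodule.eq_top_iff').mpr htop, finrank_top] at hd
      exact Nat.not_succ_le_self _ hd
    exact ⟨W' ⊔ k ∙ v, hWW'.trans le_sup_left, Submodule.finrank_sup_span_singleton hv⟩

variable {m n p : Type*} [Fintype m] [Fintype n] [Fintype p] [DecidableEq n]

theorem exists_eq_mul_of_rank_le (A : Matrix m p k) (hA : A.rank ≤ Fintype.card n)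
    (hn : Fintype.card n ≤ Fintype.card m) :
    ∃ (B : Matrix m n k) (L : Matrix n m k) (C : Matrix n p k), A = B * C ∧ L * B = 1 := by
  classical
  obtain ⟨W, hAW, hW⟩ := exists_le_finrank_eq (LinearMap.range A.mulVecLin) hA
    (hn.trans_eq (Module.finrank_fintype_fun_eq_card k).symm)
  let e : (n → k) ≃ₗ[k] W :=
    LinearEquiv.ofFinrankEq _ _ ((Module.finrank_fintype_fun_eq_card k).trans hW.symm)
  let f : (n → k) →ₗ[k] (m → k) := W.subtype ∘ₗ e
  obtain ⟨g, hgf⟩ := f.exists_leftInverse_of_injective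
    (LinearMap.ker_eq_bot.mpr (W.injective_subtype.comp e.injective))
  have hfg (v : p → k) : f (g (A *ᵥ v)) = A *ᵥ v := by
    obtain ⟨u, hu⟩ : ∃ u, f u = A *ᵥ v :=
      ⟨e.symm ⟨A *ᵥ v, hAW ⟨v, rfl⟩⟩, by simp [f]⟩
    rw [← hu, ← LinearMap.comp_apply g, hgf, LinearMap.id_apply]
  refine ⟨f.toMatrix', g.toMatrix', g.toMatrix' * A, ?_, ?_⟩
  · refine ext_of_mulVec_single fun i => ?_
    rw [← mulVec_mulVec, ← mulVec_mulVec, LinearMap.toMatrix'_mulVec, LinearMap.toMatrix'_mulVec,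
      hfg]
  · rw [← LinearMap.toMatrix'_comp, hgf, LinearMap.toMatrix'_id]

theorem exists_mul_mul_eq_one (A : Matrix m p k) :
    ∃ (P : Matrix (Fin A.rank) m k) (Q : Matrix p (Fin A.rank) k), P * A * Q = 1 := by
  obtain ⟨B, L, C, hA, hLB⟩ := exists_eq_mul_of_rank_le (n := Fin A.rank) A
    (Fintype.card_fin _).ge ((Fintype.card_fin _).trans_le A.rank_le_card_height)
  have hC : Function.Surjective C.mulVec := by
    have hrank : A.rank ≤ C.rank := by
      conv_lhs => rw [hA]
      exact rank_mul_le_right B C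
    rw [← coe_mulVecLin, ← LinearMap.range_eq_top]
    exact Submodule.eq_top_of_finrank_eq (le_antisymm (Submodule.finrank_le _)
      (by rwa [Module.finrank_fin_fun]))
  obtain ⟨Q, hCQ⟩ := mulVec_surjective_iff_exists_right_inverse.mp hC
  have hLA : L * A = C := by
    rw [congrArg (L * ·) hA, ← Matrix.mul_assoc, hLB, Matrix.one_mul]
  exact ⟨L, Q, by rw [hLA, hCQ]⟩

end RankFactorization

section ZariskiClosure

open Polynomial

variable {k : Type*} [Field k] {N : ℕ} {S : Set (Matrix (Fin N) (Fin N) k)}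
  {M : Matrix (Fin N) (Fin N) k}

theorem charpoly_coeff_eq_zero_of_mem_zClosure (hM : M ∈ zClosure S) {j : ℕ}
    (hS : ∀ x ∈ S, x.charpoly.coeff j = 0) : M.charpoly.coeff j = 0 := by
  have heval (x : Matrix (Fin N) (Fin N) k) :
      MvPolynomial.eval (fun q => x q.1 q.2) ((mvPolynomialX (Fin N) (Fin N) k).charpoly.coeff j)
        = x.charpoly.coeff j := by
    conv_rhs => rw [← mvPolynomialX_mapMatrix_eval x, RingHom.mapMatrix_apply, charpoly_map,
      Polynomial.coeff_map]
  rw [← heval]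
  exact hM _ fun x hx => by rw [heval, hS x hx]

theorem rank_le_of_mem_zClosure (hM : M ∈ zClosure S) {s : ℕ} (hS : ∀ x ∈ S, x.rank ≤ s) :
    M.rank ≤ s := by
  by_contra! hlt
  obtain ⟨P, Q, hPQ⟩ := exists_mul_mul_eq_one M
  let P' : Matrix (Fin M.rank) (Fin N) (MvPolynomial (Fin N × Fin N) k) := P.map MvPolynomial.C
  let Q' : Matrix (Fin N) (Fin M.rank) (MvPolynomial (Fin N × Fin N) k) := Q.map MvPolynomial.C
  have heval (x : Matrix (Fin N) (Fin N) k) :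
      MvPolynomial.eval (fun q => x q.1 q.2) (P' * mvPolynomialX (Fin N) (Fin N) k * Q').det
        = (P * x * Q).det := by
    rw [RingHom.map_det]
    congr 1
    ext i j
    simp [P', Q', Matrix.mul_apply]
  have hminor : ∀ x ∈ S, (P * x * Q).det = 0 := by
    intro x hx
    by_contra hdet
    have hfull := rank_of_det_ne_zero hdet
    rw [Fintype.card_fin] at hfull
    have hle := (rank_mul_le_left (P * x) Q).trans ((rank_mul_le_right P x).trans (hS x hx))
    omega
  have hzero := hM _ fun x hx => (heval x).trans (hminor x hx)
  rw [heval, hPQ, det_one] at hzero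
  exact one_ne_zero hzero

theorem mem_zClosure_of_line [Infinite k] {E : Matrix (Fin N) (Fin N) k} {f : k[X]} (hf : f ≠ 0)
    (hline : ∀ t, f.eval t ≠ 0 → M + t • E ∈ S) : M ∈ zClosure S := by
  intro P hP
  let g : k[X] := MvPolynomial.eval₂ C (fun q => C (M q.1 q.2) + X * C (E q.1 q.2)) P
  have hg (t : k) : g.eval t = MvPolynomial.eval (fun q => (M + t • E) q.1 q.2) P := by
    rw [← coe_evalRingHom, MvPolynomial.hom_eval₂, MvPolynomial.eval, MvPolynomial.coe_eval₂Hom]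
    congr 1
    · ext; simp
    · ext q
      simp only [coe_evalRingHom, eval_add, eval_mul, eval_X, eval_C, Matrix.add_apply,
        Matrix.smul_apply, smul_eq_mul]
  have hfg : f * g = 0 := Polynomial.funext fun t => by
    by_cases ht : f.eval t = 0
    · rw [eval_mul, ht, zero_mul, eval_zero]
    · rw [eval_mul, hg, hP _ (hline t ht), mul_zero, eval_zero]
  have hg0 : g = 0 := (mul_eq_zero.mp hfg).resolve_left hf
  simpa only [hg0, eval_zero, zero_smul, add_zero, eq_comm] using hg 0

end ZariskiClosure

section Forward

variable {k : Type*} [Field k] {N r : ℕ}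

theorem rank_add_le_rank_add_rank {m n : Type*} [Finite m] [Fintype n]
    (A B : Matrix m n k) : (A + B).rank ≤ A.rank + B.rank := by
  unfold Matrix.rank
  rw [mulVecLin_add]
  exact (Submodule.finrank_mono (LinearMap.range_add_le _ _)).trans
    (Submodule.finrank_add_le_finrank_add_finrank _ _)

theorem zClosure_image2_add_subset (h2r : 2 * r ≤ N) :
    zClosure (Set.image2 (· + ·) (jordanOrbit k N (twoOneLam N r))
        (jordanOrbit k N (twoOneLam N r)))
      ⊆ {M : Matrix (Fin N) (Fin N) k | M.rank ≤ 2 * r ∧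
          ∀ i : ℕ, 1 ≤ i → i ≤ r → (Matrix.charpoly M).coeff (N - (2 * i - 1)) = 0} := by
  intro M hM
  refine ⟨rank_le_of_mem_zClosure hM ?_,
    fun i hi hir => charpoly_coeff_eq_zero_of_mem_zClosure hM ?_⟩
  · rintro _ ⟨x, hx, y, hy, rfl⟩
    rw [mem_jordanOrbit_twoOneLam_iff h2r] at hx hy
    calc (x + y).rank ≤ x.rank + y.rank := rank_add_le_rank_add_rank x y
      _ = 2 * r := by rw [hx.1, hy.1, two_mul]
  · rintro _ ⟨x, hx, y, hy, rfl⟩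
    rw [mem_jordanOrbit_twoOneLam_iff h2r] at hx hy
    refine charpoly_add_coeff_eq_zero_of_mul_self_eq_zero hx.2 hy.2 ?_
    rw [Fintype.card_fin, Nat.odd_iff]
    omega

end Forward

section EvenPolynomial

open Polynomial

variable {R k : Type*} [CommRing R] [Field k] {r : ℕ}

theorem expand_two_contract_two {p : R[X]} (hp : ∀ j, Odd j → p.coeff j = 0) :
    expand R 2 (contract 2 p) = p := by
  ext j
  rw [coeff_expand two_pos]
  split_ifs with hj
  · rw [coeff_contract two_ne_zero, Nat.div_mul_cancel hj]
  · rw [hp j (by rwa [← Nat.not_even_iff_odd, even_iff_two_dvd])]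

theorem prod_X_sub_C_append_neg (a : Fin r → R) :
    ∏ i, (X - C (Fin.append a (-a) i)) = expand R 2 (∏ i, (X - C (a i ^ 2))) := by
  rw [Fin.prod_univ_add, ← Finset.prod_mul_distrib, map_prod]
  refine Finset.prod_congr rfl fun i _ => ?_
  simp only [Fin.append_left, Fin.append_right, Pi.neg_apply, map_neg, map_sub, expand_X,
    expand_C, map_pow]
  ring

theorem exists_eq_prod_X_sub_C_of_splits {p : k[X]} (hs : p.Splits) (hp : p.Monic)
    (hr : p.natDegree = r) : ∃ c : Fin r → k, p = ∏ i, (X - C (c i)) := by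
  have hlength : p.roots.toList.length = r := by
    rw [Multiset.length_toList, ← hs.natDegree_eq_card_roots, hr]
  subst hlength
  refine ⟨p.roots.toList.get, ?_⟩
  conv_lhs => rw [hs.eq_prod_roots_of_monic hp, ← Multiset.coe_toList p.roots, Multiset.map_coe,
    Multiset.prod_coe]
  exact (Fin.prod_univ_fun_getElem _ _).symm

theorem exists_eq_prod_X_sub_C_append_neg [IsAlgClosed k] {p : k[X]} (hp : p.Monic)
    (hr : p.natDegree = r + r) (hodd : ∀ j, Odd j → p.coeff j = 0) :
    ∃ a : Fin r → k, p = ∏ i, (X - C (Fin.append a (-a) i)) := by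
  have hexpand := expand_two_contract_two hodd
  have hmonic : (contract 2 p).Monic := by rwa [← monic_expand_iff two_pos, hexpand]
  have hdegree : (contract 2 p).natDegree = r := by
    have := natDegree_expand 2 (contract 2 p)
    rw [hexpand, hr] at this
    omega
  obtain ⟨c, hc⟩ := exists_eq_prod_X_sub_C_of_splits (IsAlgClosed.splits _) hmonic hdegree
  choose a ha using fun i => IsAlgClosed.exists_pow_nat_eq (c i) two_pos
  refine ⟨a, ?_⟩
  rw [prod_X_sub_C_append_neg, ← hexpand, hc]
  simp only [ha]

end EvenPolynomial

section Triangularization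

open Polynomial

variable {R k : Type*} [CommRing R] [Field k] {n : ℕ}

/-- The block upper triangular matrix `[[a, w], [0, A]]` whose first diagonal block has size one;
it carries the induction on the size in the triangularization of matrices. -/
def bordered (a : R) (w : Fin n → R) (A : Matrix (Fin n) (Fin n) R) :
    Matrix (Fin (n + 1)) (Fin (n + 1)) R :=
  of (Fin.cons (Fin.cons a w) fun i => Fin.cons 0 (A i))

theorem exists_eq_bordered {A : Matrix (Fin (n + 1)) (Fin (n + 1)) R} {a : R}
    (hA : A.col 0 = Pi.single 0 a) : ∃ w B, A = bordered a w B := by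
  have hcol (i : Fin (n + 1)) : A i 0 = (Pi.single 0 a : Fin (n + 1) → R) i := congrFun hA i
  refine ⟨fun j => A 0 j.succ, A.submatrix Fin.succ Fin.succ, ?_⟩
  ext i j
  cases j using Fin.cases <;> cases i using Fin.cases <;> simp [bordered, hcol]

theorem bordered_mul_bordered (a b : R) (w z : Fin n → R) (A B : Matrix (Fin n) (Fin n) R) :
    bordered a w A * bordered b z B = bordered (a * b) (a • z + w ᵥ* B) (A * B) := by
  ext i j
  cases j using Fin.cases <;> cases i using Fin.cases <;>
    simp [bordered, Matrix.mul_apply, Fin.sum_univ_succ, vecMul, dotProduct]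

theorem det_bordered (a : R) (w : Fin n → R) (A : Matrix (Fin n) (Fin n) R) :
    (bordered a w A).det = a * A.det := by
  rw [det_succ_column_zero, Fin.sum_univ_succ]
  have hminor : (bordered a w A).submatrix (Fin.succAbove 0) Fin.succ = A := by
    ext i j
    simp [bordered]
  simp only [hminor]
  simp [bordered]

theorem charpoly_bordered (a : R) (w : Fin n → R) (A : Matrix (Fin n) (Fin n) R) :
    (bordered a w A).charpoly = (X - C a) * A.charpoly := by
  have hcharmatrix : charmatrix (bordered a w A)
      = bordered (X - C a) (fun j => -C (w j)) (charmatrix A) := by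
    ext i j : 2
    cases j using Fin.cases <;> cases i using Fin.cases <;>
      simp [bordered, charmatrix_apply, diagonal_apply, Fin.succ_ne_zero, (Fin.succ_ne_zero _).symm]
  rw [Matrix.charpoly, hcharmatrix, det_bordered, Matrix.charpoly]

theorem isUpperTriangular_bordered (a : R) (w : Fin n → R) {A : Matrix (Fin n) (Fin n) R}
    (hA : A.IsUpperTriangular) : (bordered a w A).IsUpperTriangular := by
  intro i j hij
  cases i using Fin.cases with
  | zero => exact absurd hij (Fin.not_lt_zero j)
  | succ i =>
    cases j using Fin.cases with
    | zero => rfl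
    | succ j => exact hA (Fin.succ_lt_succ_iff.mp hij)

theorem exists_isUnit_det_col_zero_eq {v : Fin (n + 1) → k} (hv : v ≠ 0) :
    ∃ P : Matrix (Fin (n + 1)) (Fin (n + 1)) k, IsUnit P.det ∧ P.col 0 = v := by
  obtain ⟨j, hj⟩ := Function.ne_iff.mp hv
  refine ⟨(updateCol 1 j v).submatrix id (Equiv.swap 0 j), ?_, ?_⟩
  · rw [det_permute', ← cramer_apply, cramer_one]
    exact ((Units.isUnit _).map (Int.castRingHom k)).mul (isUnit_iff_ne_zero.mpr hj)
  · ext i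
    simp only [col_apply, submatrix_apply, id_eq, Equiv.swap_apply_left, updateCol_self]

theorem exists_mulVec_eq_smul {m : Type*} [Fintype m] [DecidableEq m] {A : Matrix m m k} {μ : k}
    (hμ : A.charpoly.IsRoot μ) : ∃ v ≠ 0, A *ᵥ v = μ • v := by
  rw [IsRoot.def, eval_charpoly] at hμ
  obtain ⟨v, hv, hAv⟩ := exists_mulVec_eq_zero_iff.mpr hμ
  refine ⟨v, hv, ?_⟩
  rw [sub_mulVec, sub_eq_zero] at hAv
  rw [← hAv, scalar_apply, ← smul_one_eq_diagonal, smul_mulVec, one_mulVec]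

theorem charpoly_eq_of_mul_eq_mul {m : Type*} [Fintype m] [DecidableEq m] {A B P : Matrix m m R}
    (hP : IsUnit P.det) (h : A * P = P * B) : A.charpoly = B.charpoly := by
  rw [← mul_nonsing_inv_cancel_right _ A hP, h, mul_assoc, charpoly_mul_comm, mul_assoc,
    nonsing_inv_mul _ hP, mul_one]

theorem exists_mul_eq_mul_bordered {A : Matrix (Fin (n + 1)) (Fin (n + 1)) k} {μ : k}
    (hμ : A.charpoly.IsRoot μ) :
    ∃ P w B, IsUnit P.det ∧ A * P = P * bordered μ w B := by
  obtain ⟨v, hv, hAv⟩ := exists_mulVec_eq_smul hμ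
  obtain ⟨P, hP, rfl⟩ := exists_isUnit_det_col_zero_eq hv
  have hcol : (P⁻¹ * (A * P)).col 0 = Pi.single 0 μ := by
    rw [← mulVec_single_one, ← mulVec_mulVec, ← mulVec_mulVec, mulVec_single_one, hAv, mulVec_smul,
      ← mulVec_single_one, mulVec_mulVec, nonsing_inv_mul _ hP, one_mulVec, ← Pi.single_smul,
      smul_eq_mul, mul_one]
  obtain ⟨w, B, hB⟩ := exists_eq_bordered hcol
  exact ⟨P, w, B, hP, by rw [← hB, mul_nonsing_inv_cancel_left _ _ hP]⟩

theorem exists_mul_eq_mul_isUpperTriangular (A : Matrix (Fin n) (Fin n) k) {d : Fin n → k}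
    (hA : A.charpoly = ∏ i, (X - C (d i))) :
    ∃ P U : Matrix (Fin n) (Fin n) k,
      IsUnit P.det ∧ A * P = P * U ∧ U.IsUpperTriangular ∧ U.diag = d := by
  induction n with
  | zero => exact ⟨1, A, by simp, by simp, fun i => i.elim0, Subsingleton.elim _ _⟩
  | succ n ih =>
    obtain ⟨P, w, B, hP, hAP⟩ := exists_mul_eq_mul_bordered (A := A) (μ := d 0) (by
      rw [hA, Fin.prod_univ_succ, IsRoot.def, eval_mul, eval_sub, eval_X, eval_C, sub_self,
        zero_mul])
    have hB : B.charpoly = ∏ i : Fin n, (X - C (d i.succ)) := by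
      rw [charpoly_eq_of_mul_eq_mul hP hAP, charpoly_bordered, Fin.prod_univ_succ] at hA
      exact mul_left_cancel₀ (X_sub_C_ne_zero _) hA
    obtain ⟨Q, U, hQ, hBQ, hU, hUd⟩ := ih B hB
    refine ⟨P * bordered 1 0 Q, bordered (d 0) (w ᵥ* Q) U, ?_, ?_,
      isUpperTriangular_bordered _ _ hU, ?_⟩
    · rw [det_mul, det_bordered, one_mul]
      exact hP.mul hQ
    · rw [← mul_assoc, hAP, mul_assoc, mul_assoc, bordered_mul_bordered, bordered_mul_bordered,
        hBQ, mul_one, one_mul, smul_zero, zero_add, zero_vecMul, add_zero, one_smul]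
    · funext i
      cases i using Fin.cases with
      | zero => rfl
      | succ i => exact congrFun hUd i

end Triangularization

/-- An idempotent `p` for which `a` is odd: in the `ℤ/2`-grading whose even and odd parts are the
images of `p` and `1 - p`, the element `a` exchanges the two parts. -/
structure IsParityProjection {S : Type*} [Ring S] (a p : S) : Prop where
  isIdempotentElem : IsIdempotentElem p
  mul_eq_mul_one_sub : p * a = a * (1 - p)

namespace IsParityProjection

theorem one_sub {S : Type*} [Ring S] {a p : S} (h : IsParityProjection a p) :
    IsParityProjection a (1 - p) where
  isIdempotentElem := h.isIdempotentElem.one_sub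
  mul_eq_mul_one_sub := by
    rw [sub_mul, one_mul, h.mul_eq_mul_one_sub, mul_sub, mul_sub, mul_sub, mul_one]

theorem mul_mul_self_eq_zero {S : Type*} [Ring S] {a p : S} (h : IsParityProjection a p) :
    p * a * p = 0 := by
  rw [h.mul_eq_mul_one_sub, mul_assoc, h.isIdempotentElem.one_sub_mul_self, mul_zero]

end IsParityProjection

section ParityProjection

variable {k : Type*} [Field k] {m n : Type*} [Fintype m] [Fintype n] [DecidableEq n]

theorem rank_add_rank_one_sub {p : Matrix n n k} (hp : IsIdempotentElem p) :
    p.rank + (1 - p).rank = Fintype.card n := by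
  apply le_antisymm
  · exact rank_add_rank_le_card_of_mul_eq_zero hp.mul_one_sub_self
  · calc Fintype.card n = (p + (1 - p)).rank := by rw [add_sub_cancel, rank_one]
      _ ≤ p.rank + (1 - p).rank := rank_add_le_rank_add_rank _ _

theorem IsParityProjection.two_mul_rank {A p : Matrix n n k} (h : IsParityProjection A p)
    (hA : IsUnit A.det) : 2 * p.rank = Fintype.card n := by
  have hrank : p.rank = (1 - p).rank := by
    rw [← rank_mul_eq_left_of_isUnit_det A p hA, h.mul_eq_mul_one_sub,
      rank_mul_eq_right_of_isUnit_det A _ hA]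
  rw [← rank_add_rank_one_sub h.isIdempotentElem, ← hrank, two_mul]

theorem IsParityProjection.mul_mul_mul_self_eq_zero {B : Matrix m n k} {C : Matrix n m k}
    {p : Matrix n n k} (h : IsParityProjection (C * B) p) : B * p * C * (B * p * C) = 0 := by
  calc B * p * C * (B * p * C) = B * (p * (C * B) * p) * C := by simp only [Matrix.mul_assoc]
    _ = 0 := by rw [h.mul_mul_self_eq_zero, Matrix.mul_zero, Matrix.zero_mul]

theorem rank_mul_mul_eq_of_isUnit_det {B : Matrix m n k} {C : Matrix n m k} (p : Matrix n n k)
    (hCB : IsUnit (C * B).det) : (B * p * C).rank = p.rank := by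
  apply le_antisymm
  · exact (rank_mul_le_left _ C).trans (rank_mul_le_right B p)
  · calc p.rank = (C * B * (p * (C * B))).rank := by
          rw [rank_mul_eq_right_of_isUnit_det _ _ hCB, rank_mul_eq_left_of_isUnit_det _ _ hCB]
      _ = (C * (B * p * C) * B).rank := by simp only [Matrix.mul_assoc]
      _ ≤ (B * p * C).rank := (rank_mul_le_left _ B).trans (rank_mul_le_right C _)

theorem IsParityProjection.mul_mem_image2_add_jordanOrbit {N r : ℕ} (h2r : 2 * r ≤ N)
    {B : Matrix (Fin N) (Fin (r + r)) k} {C : Matrix (Fin (r + r)) (Fin N) k}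
    {p : Matrix (Fin (r + r)) (Fin (r + r)) k} (hp : IsParityProjection (C * B) p)
    (hCB : IsUnit (C * B).det) :
    B * C ∈ Set.image2 (· + ·) (jordanOrbit k N (twoOneLam N r))
      (jordanOrbit k N (twoOneLam N r)) := by
  have hmem {q : Matrix (Fin (r + r)) (Fin (r + r)) k} (hq : IsParityProjection (C * B) q) :
      B * q * C ∈ jordanOrbit k N (twoOneLam N r) := by
    refine (mem_jordanOrbit_twoOneLam_iff h2r).mpr ⟨?_, hq.mul_mul_mul_self_eq_zero⟩
    have htwo := hq.two_mul_rank hCB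
    rw [Fintype.card_fin] at htwo
    rw [rank_mul_mul_eq_of_isUnit_det q hCB]
    omega
  refine ⟨B * p * C, hmem hp, B * (1 - p) * C, hmem hp.one_sub, ?_⟩
  dsimp only
  rw [← Matrix.add_mul, ← Matrix.mul_add, add_sub_cancel, Matrix.mul_one]

end ParityProjection

section Krylov

open Polynomial

variable {R S : Type*} [CommRing R] [CommRing S]

/-- The Krylov matrix of a row vector `v`, with rows `v, vA, …, vA^(m-1)`; for square size it is
invertible precisely when `v` is a cyclic vector of `A`. -/
def krylov {n : Type*} [Fintype n] [DecidableEq n] (v : n → R) (A : Matrix n n R) (m : ℕ) :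
    Matrix (Fin m) n R :=
  of fun j => v ᵥ* A ^ (j : ℕ)

theorem krylov_map {n : Type*} [Fintype n] [DecidableEq n] (f : R →+* S) (v : n → R)
    (A : Matrix n n R) (m : ℕ) : (krylov v A m).map f = krylov (f ∘ v) (A.map f) m := by
  ext i j
  rw [map_apply, krylov, of_apply, RingHom.map_vecMul, krylov, of_apply, ← RingHom.mapMatrix_apply,
    ← RingHom.mapMatrix_apply, map_pow]

variable {n : ℕ}

theorem vecMul_pow_card_eq_neg_sum (A : Matrix (Fin n) (Fin n) R) (v : Fin n → R) :
    v ᵥ* A ^ n = -∑ j : Fin n, A.charpoly.coeff j • krylov v A n j := by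
  nontriviality R
  have hcayley : A ^ n + ∑ j : Fin n, A.charpoly.coeff j • A ^ (j : ℕ) = 0 := by
    have h := aeval_self_charpoly A
    rw [aeval_eq_sum_range, charpoly_natDegree_eq_dim, Fintype.card_fin, Finset.sum_range_succ] at h
    have hlead : A.charpoly.coeff n = 1 := by
      simpa using A.charpoly_monic.coeff_natDegree
    rwa [hlead, one_smul, add_comm, Finset.sum_range] at h
  rw [eq_neg_of_add_eq_zero_left hcayley, vecMul_neg, vecMul_sum]
  simp only [vecMul_smul]
  rfl

theorem isParityProjection_of_vecMul_pow {A p : Matrix (Fin n) (Fin n) R} {v : Fin n → R}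
    (hv : IsUnit (krylov v A n).det)
    (hp : ∀ m ≤ n, v ᵥ* A ^ m ᵥ* p = if Even m then v ᵥ* A ^ m else 0) :
    IsParityProjection A p := by
  have hext {B C : Matrix (Fin n) (Fin n) R}
      (h : ∀ j < n, v ᵥ* A ^ j ᵥ* B = v ᵥ* A ^ j ᵥ* C) : B = C := by
    refine ((isUnit_iff_isUnit_det _).mpr hv).mul_left_cancel (funext fun j => ?_)
    rw [mul_apply_eq_vecMul, mul_apply_eq_vecMul]
    exact h j j.isLt
  refine ⟨hext fun j hj => ?_, hext fun j hj => ?_⟩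
  · rw [← vecMul_vecMul, hp j hj.le]
    split_ifs with hj2
    · rw [hp j hj.le, if_pos hj2]
    · rw [zero_vecMul]
  · rw [← vecMul_vecMul, ← vecMul_vecMul, hp j hj.le, vecMul_vecMul _ (A ^ j), ← pow_succ,
      vecMul_sub, vecMul_one, hp (j + 1) hj]
    split_ifs with hj2 hj3 hj3
    · exact absurd hj3 (Nat.not_even_iff_odd.mpr hj2.add_one)
    · rw [vecMul_vecMul, ← pow_succ, sub_zero]
    · rw [zero_vecMul, sub_self]
    · exact absurd (Nat.not_even_iff_odd.mp hj2).add_one hj3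

/- The projection keeps the even Krylov vectors and kills the odd ones. Cayley-Hamilton for an even
characteristic polynomial says that `vA^n` is a combination of even Krylov vectors, so `A` still
exchanges parities at the last step. -/
theorem exists_isParityProjection_of_isUnit_det_krylov {A : Matrix (Fin n) (Fin n) R}
    {v : Fin n → R} (hn : Even n) (hv : IsUnit (krylov v A n).det)
    (hA : ∀ j, Odd j → A.charpoly.coeff j = 0) : ∃ p, IsParityProjection A p := by
  let K := krylov v A n
  let D : Matrix (Fin n) (Fin n) R := diagonal fun j => if Even (j : ℕ) then 1 else 0
  have hrow (j : Fin n) :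
      K j ᵥ* (K⁻¹ * (D * K)) = if Even (j : ℕ) then K j else 0 := by
    rw [← mul_apply_eq_vecMul, mul_nonsing_inv_cancel_left _ _ hv]
    ext i
    rw [diagonal_mul]
    split_ifs <;> simp
  refine ⟨K⁻¹ * (D * K), isParityProjection_of_vecMul_pow hv fun m hm => ?_⟩
  rcases hm.lt_or_eq with hm | rfl
  · exact hrow ⟨m, hm⟩
  · rw [if_pos hn, vecMul_pow_card_eq_neg_sum, neg_vecMul, sum_vecMul]
    refine congrArg Neg.neg (Finset.sum_congr rfl fun j _ => ?_)
    rw [smul_vecMul, hrow]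
    split_ifs with hj
    · rfl
    · rw [hA j (Nat.not_even_iff_odd.mp hj), zero_smul, zero_smul]

theorem vecMul_pow_apply_of_superdiagonal_eq_one {T : Matrix (Fin n) (Fin n) R}
    (hT : ∀ i j : Fin n, i < j → T i j = if (i : ℕ) + 1 = j then 1 else 0) (m : ℕ) (j : Fin n)
    (hmj : m ≤ j) :
    ((fun i : Fin n => if (i : ℕ) = 0 then 1 else 0) ᵥ* T ^ m) j
      = if m = j then 1 else 0 := by
  induction m generalizing j with
  | zero => simp only [pow_zero, vecMul_one, eq_comm]
  | succ m ih =>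
    let i₀ : Fin n := ⟨m, (Nat.lt_of_succ_le hmj).trans j.isLt⟩
    rw [pow_succ, ← vecMul_vecMul, vecMul, dotProduct,
      Finset.sum_eq_single_of_mem i₀ (Finset.mem_univ _)]
    · rw [ih i₀ le_rfl, if_pos rfl, one_mul, hT i₀ j hmj]
    · intro i _ hi
      rcases le_or_gt m i with hmi | him
      · rw [ih i hmi, if_neg fun h => hi (Fin.ext h.symm), zero_mul]
      · rw [hT i j (him.trans hmj), if_neg (by omega), mul_zero]

theorem isUnit_det_krylov_of_superdiagonal_eq_one {T : Matrix (Fin n) (Fin n) R}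
    (hT : ∀ i j : Fin n, i < j → T i j = if (i : ℕ) + 1 = j then 1 else 0) :
    IsUnit (krylov (fun i : Fin n => if (i : ℕ) = 0 then 1 else 0) T n).det := by
  have hentry := vecMul_pow_apply_of_superdiagonal_eq_one hT
  have hlower : (krylov (fun i : Fin n => if (i : ℕ) = 0 then 1 else 0) T n).IsLowerTriangular := by
    intro i j hij
    have hij : (i : ℕ) < j := hij
    exact (hentry i j hij.le).trans (if_neg hij.ne)
  have hdiag (i : Fin n) :
      krylov (fun i : Fin n => if (i : ℕ) = 0 then 1 else 0) T n i i = 1 :=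
    (hentry i i le_rfl).trans (if_pos rfl)
  rw [det_of_isLowerTriangular _ hlower, Finset.prod_eq_one fun i _ => hdiag i]
  exact isUnit_one

theorem exists_isUpperTriangular_isUnit_det_krylov (d : Fin n → R) :
    ∃ (T : Matrix (Fin n) (Fin n) R) (v : Fin n → R),
      T.IsUpperTriangular ∧ T.diag = d ∧ IsUnit (krylov v T n).det := by
  refine ⟨of fun i j => if i = j then d i else if (i : ℕ) + 1 = j then 1 else 0, _,
    fun i j hij => ?_, funext fun i => ?_,
    isUnit_det_krylov_of_superdiagonal_eq_one fun i j hij => ?_⟩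
  · have hji : (j : ℕ) < i := hij
    rw [of_apply, if_neg (show i ≠ j from hij.ne'), if_neg (by omega)]
  · rw [diag_apply, of_apply, if_pos rfl]
  · rw [of_apply, if_neg hij.ne]

end Krylov

section Generic

open Polynomial

variable {R : Type*} [CommRing R] {n r : ℕ}

theorem charpoly_coeff_eq_zero_of_isUpperTriangular {U : Matrix (Fin (r + r)) (Fin (r + r)) R}
    (hU : U.IsUpperTriangular) {a : Fin r → R} (hd : U.diag = Fin.append a (-a)) {j : ℕ}
    (hj : Odd j) : U.charpoly.coeff j = 0 := by
  have hcharpoly : U.charpoly = ∏ i, (X - C (U.diag i)) := charpoly_of_isUpperTriangular U hU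
  rw [hcharpoly, hd, prod_X_sub_C_append_neg, coeff_expand two_pos, if_neg hj.not_two_dvd_nat]

theorem exists_eval_eq_det_mul_det_krylov (A E : Matrix (Fin n) (Fin n) R) (v : Fin n → R) :
    ∃ f : R[X], ∀ t, f.eval t = (A + t • E).det * (krylov v (A + t • E) n).det := by
  let L : Matrix (Fin n) (Fin n) R[X] := A.map C + (X : R[X]) • E.map C
  refine ⟨L.det * (krylov (C ∘ v) L n).det, fun t => ?_⟩
  have hL : L.map (evalRingHom t) = A + t • E := by
    ext i j
    simp only [L, map_apply, Matrix.add_apply, Matrix.smul_apply, smul_eq_mul, coe_evalRingHom,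
      eval_add, eval_mul, eval_X, eval_C]
  have hv : evalRingHom t ∘ C ∘ v = v := by
    ext i
    simp
  rw [eval_mul, ← coe_evalRingHom, RingHom.map_det, RingHom.map_det, RingHom.mapMatrix_apply,
    RingHom.mapMatrix_apply, krylov_map, hL, hv]

theorem add_smul_sub_append_neg (a b : Fin r → R) (t : R) :
    Fin.append a (-a) + t • (Fin.append b (-b) - Fin.append a (-a))
      = Fin.append (a + t • (b - a)) (-(a + t • (b - a))) := by
  ext i
  cases i using Fin.addCases <;>
    simp only [Pi.add_apply, Pi.smul_apply, Pi.sub_apply, Pi.neg_apply, Fin.append_left,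
      Fin.append_right, smul_eq_mul]
  ring

theorem exists_line_isParityProjection {k : Type*} [Field k]
    {U : Matrix (Fin (r + r)) (Fin (r + r)) k} (hU : U.IsUpperTriangular) {a : Fin r → k}
    (hd : U.diag = Fin.append a (-a)) :
    ∃ (E : Matrix (Fin (r + r)) (Fin (r + r)) k) (f : k[X]), f ≠ 0 ∧ ∀ t, f.eval t ≠ 0 →
      IsUnit (U + t • E).det ∧ ∃ p, IsParityProjection (U + t • E) p := by
  obtain ⟨T, v, hT, hTd, hv⟩ :=
    exists_isUpperTriangular_isUnit_det_krylov (Fin.append (1 : Fin r → k) (-1))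
  obtain ⟨f, hf⟩ := exists_eval_eq_det_mul_det_krylov U (T - U) v
  have hf1 : f.eval 1 ≠ 0 := by
    have hTdet : T.det ≠ 0 := by
      have hprod : T.det = ∏ i, T.diag i := det_of_isUpperTriangular hT
      rw [hprod, hTd, Fin.prod_univ_add]
      simp only [Fin.append_left, Fin.append_right, Pi.one_apply, Pi.neg_apply,
        Finset.prod_const, one_pow, one_mul]
      exact pow_ne_zero _ (neg_ne_zero.mpr one_ne_zero)
    rw [hf, one_smul, add_sub_cancel]
    exact mul_ne_zero hTdet hv.ne_zero
  refine ⟨T - U, f, fun h => hf1 (by rw [h, eval_zero]), fun t ht => ?_⟩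
  rw [hf] at ht
  have hupper : (U + t • (T - U)).IsUpperTriangular := hU.add fun i j hij => by
    rw [Matrix.smul_apply, hT.sub hU hij, smul_zero]
  have hdiag : (U + t • (T - U)).diag = Fin.append (a + t • (1 - a)) (-(a + t • (1 - a))) := by
    rw [diag_add, diag_smul, diag_sub, hd, hTd, add_smul_sub_append_neg]
  exact ⟨(left_ne_zero_of_mul ht).isUnit,
    exists_isParityProjection_of_isUnit_det_krylov ⟨r, rfl⟩ (right_ne_zero_of_mul ht).isUnit
      fun j => charpoly_coeff_eq_zero_of_isUpperTriangular hupper hdiag⟩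

end Generic

section Backward

variable {k : Type*} [Field k] {N r : ℕ}

theorem charpoly_mul_coeff_eq_zero (h2r : 2 * r ≤ N) {B : Matrix (Fin N) (Fin (r + r)) k}
    {C : Matrix (Fin (r + r)) (Fin N) k}
    (hBC : ∀ i : ℕ, 1 ≤ i → i ≤ r → (B * C).charpoly.coeff (N - (2 * i - 1)) = 0) {j : ℕ}
    (hj : Odd j) : (C * B).charpoly.coeff j = 0 := by
  rcases lt_or_ge (r + r) j with hlt | hle
  · refine Polynomial.coeff_eq_zero_of_natDegree_lt ?_
    rwa [charpoly_natDegree_eq_dim, Fintype.card_fin]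
  · obtain ⟨q, rfl⟩ := hj
    have hi := hBC (r - q) (by omega) (by omega)
    rwa [charpoly_mul_comm_of_le _ _ (by simpa [two_mul] using h2r), Fintype.card_fin,
      Fintype.card_fin, show N - (2 * (r - q) - 1) = 2 * q + 1 + (N - (r + r)) by omega,
      Polynomial.coeff_X_pow_mul] at hi

theorem exists_eq_mul_isUpperTriangular [IsAlgClosed k] (h2r : 2 * r ≤ N)
    {M : Matrix (Fin N) (Fin N) k} (hrank : M.rank ≤ 2 * r)
    (hcoeff : ∀ i : ℕ, 1 ≤ i → i ≤ r → M.charpoly.coeff (N - (2 * i - 1)) = 0) :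
    ∃ (B : Matrix (Fin N) (Fin (r + r)) k) (L C : Matrix (Fin (r + r)) (Fin N) k)
      (a : Fin r → k), M = B * C ∧ L * B = 1 ∧ (C * B).IsUpperTriangular ∧
        (C * B).diag = Fin.append a (-a) := by
  obtain ⟨B, L, C, rfl, hLB⟩ := exists_eq_mul_of_rank_le (n := Fin (r + r)) M
    (by rwa [Fintype.card_fin, ← two_mul]) (by rwa [Fintype.card_fin, Fintype.card_fin, ← two_mul])
  obtain ⟨a, ha⟩ := exists_eq_prod_X_sub_C_append_neg (charpoly_monic (C * B))
    (by rw [charpoly_natDegree_eq_dim, Fintype.card_fin])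
    fun j => charpoly_mul_coeff_eq_zero h2r hcoeff
  obtain ⟨P, U, hP, hCBP, hU, hUd⟩ := exists_mul_eq_mul_isUpperTriangular (C * B) ha
  have hconj : P⁻¹ * C * (B * P) = U := by
    rw [Matrix.mul_assoc, ← Matrix.mul_assoc C, hCBP, nonsing_inv_mul_cancel_left _ _ hP]
  refine ⟨B * P, P⁻¹ * L, P⁻¹ * C, a, ?_, ?_, hconj ▸ hU, hconj ▸ hUd⟩
  · rw [Matrix.mul_assoc, mul_nonsing_inv_cancel_left _ _ hP]
  · rw [Matrix.mul_assoc, ← Matrix.mul_assoc L, hLB, Matrix.one_mul, nonsing_inv_mul _ hP]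

theorem subset_zClosure_image2_add [IsAlgClosed k] (h2r : 2 * r ≤ N) :
    {M : Matrix (Fin N) (Fin N) k | M.rank ≤ 2 * r ∧
          ∀ i : ℕ, 1 ≤ i → i ≤ r → (Matrix.charpoly M).coeff (N - (2 * i - 1)) = 0}
      ⊆ zClosure (Set.image2 (· + ·) (jordanOrbit k N (twoOneLam N r))
        (jordanOrbit k N (twoOneLam N r))) := by
  rintro M ⟨hrank, hcoeff⟩
  obtain ⟨B, L, C, a, rfl, hLB, hU, hd⟩ := exists_eq_mul_isUpperTriangular h2r hrank hcoeff
  obtain ⟨E, f, hf, hE⟩ := exists_line_isParityProjection hU hd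
  refine mem_zClosure_of_line (E := B * (E * L)) hf fun t ht => ?_
  have hCB : (C + t • (E * L)) * B = C * B + t • E := by
    rw [Matrix.add_mul, Matrix.smul_mul, Matrix.mul_assoc, hLB, Matrix.mul_one]
  obtain ⟨hdet, p, hp⟩ := hE t ht
  rw [← hCB] at hdet hp
  rw [← Matrix.mul_smul, ← Matrix.mul_add]
  exact hp.mul_mem_image2_add_jordanOrbit h2r hdet

end Backward

theorem stmt2_general {k : Type*} [Field k] [IsAlgClosed k] {N r : ℕ} (h2r : 2 * r ≤ N) :
    zClosure (Set.image2 (· + ·) (jordanOrbit k N (twoOneLam N r))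
        (jordanOrbit k N (twoOneLam N r)))
      = {M : Matrix (Fin N) (Fin N) k | M.rank ≤ 2 * r ∧
          ∀ i : ℕ, 1 ≤ i → i ≤ r → (Matrix.charpoly M).coeff (N - (2 * i - 1)) = 0} :=
  (zClosure_image2_add_subset h2r).antisymm (subset_zClosure_image2_add h2r)

/-- For `λ = (2^r, 1^{N−2r})`, the conical secant variety of `O_λ` is the set of matrices
of rank at most `2r` whose characteristic polynomial coefficients in degrees
`N−1, N−3, …, N−2r+1` all vanish. -/
theorem stmt2 {k : Type*} [Field k] [IsAlgClosed k] [CharZero k]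
    {N r : ℕ} (hr : 1 ≤ r) (h2r : 2 * r ≤ N) :
    zClosure (Set.image2 (· + ·) (jordanOrbit k N (twoOneLam N r))
        (jordanOrbit k N (twoOneLam N r)))
      = {M : Matrix (Fin N) (Fin N) k | M.rank ≤ 2 * r ∧
          ∀ i : ℕ, 1 ≤ i → i ≤ r → (Matrix.charpoly M).coeff (N - (2 * i - 1)) = 0} :=
  stmt2_general h2r
end
end
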